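/- arXiv:2006.06107 — 3 statements merged into one kernel-verified Lean document; each statement's English description precedes it below -/
import Mathlib

section
/- Let k ≥ 3 and m ≥ 1 be integers. There exists n₀ such that for all n > n₀, the Turán number of m vertex-disjoint copies of the odd wheel W_{2k+1} satisfies ex(n, mW_{2k+1}) = max over integers n₀' with 1 ≤ n₀' ≤ n−m+1 of [ C(m−1,2) + ⌊(k−1)·n₀'/2⌋ + (n₀'+m−1)(n−m+1) − n₀'² + 1 ], where C(m−1,2) denotes the binomial coefficient (m−1 choose 2). -/
/-!
Write `W` for the wheel `W_{2k+1}`. The proof shows that for large `n` the Turán number equals the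
function `exF`: for one wheel it is `oneWheel k n`, the maximum over `p` of
`p (n - p) + ⌊(k - 1) p / 2⌋ + 1`, and each further wheel adds one dominating vertex. Unfolding the
recursion gives the closed form of the theorem (`statement_sup_eq`).

**Lower bound.** Take a graph on `p` vertices which is as close to `(k - 1)`-regular as parity
allows and whose components have at most `2k - 2` vertices (`exists_blk`), and join it completely to
`n - p` vertices spanning a single edge. This graph is `W`-free (`lowerGraph_wheelFree`). Adding a
dominating vertex raises the number of disjoint wheels by at most one (`cone_not_contains`).

**Upper bound.** Vertices of degree below the increment of `exF` can be deleted one at a time, so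
all degrees may be assumed to be at least `n / 2 - O(1)` (`reduce_minDegree`). Under this condition a
vertex whose degree exceeds `n / 2` by a linear amount has a dense neighbourhood, hence is the hub of
a wheel avoiding any given bounded set (`exists_wheel_of_large_degree`).

* For `r + 2` wheels (`upperBound_succ`): if there is a vertex of large degree, deleting it leaves a
  graph without `r + 1` disjoint wheels and induction applies. Otherwise either there is no wheel at
  all, or deleting the vertices of one wheel loses too few edges for the graph to be extremal.
* For one wheel (`upperBound_zero`): all degrees are close to `n / 2`, and the neighbourhood of a
  vertex has few edges, which yields a partition `A ∪ B` that is complete up to `O(1)` missing pairs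
  at each vertex (`nearBip_of_clean`). In such a graph a wheel with hub in `A` arises as soon as the
  hub has `j` neighbours in `A` and `B` contains disjoint paths that together fill the `j` gaps
  between these neighbours on the rim (`NearBip.wheel`). Playing the degrees inside `A` and inside `B`
  against each other in this way gives a bound of `(k - 1) max(|A|, |B|) + 2` for the sum of all
  degrees inside the two sides (`NearBip.sum_le`), which is exactly what the formula requires.
-/

open SimpleGraph

/-- `G` contains `H` as a (not necessarily induced) subgraph. -/
def Contains {α β : Type*} (G : SimpleGraph α) (H : SimpleGraph β) : Prop :=
  ∃ f : H →g G, Function.Injective f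

/-- The join `G₁ ⊗ G₂` of two graphs: disjoint union plus all cross edges. -/
def graphJoin {α β : Type*} (G : SimpleGraph α) (H : SimpleGraph β) :
    SimpleGraph (α ⊕ β) :=
  SimpleGraph.fromRel (fun u v =>
    match u, v with
    | Sum.inl a, Sum.inl b => G.Adj a b
    | Sum.inr a, Sum.inr b => H.Adj a b
    | Sum.inl _, Sum.inr _ => True
    | Sum.inr _, Sum.inl _ => True)

/-- The wheel `W_q` on `q` vertices: a hub joined to all vertices of a cycle `C_{q-1}`. -/
def wheelGraph (q : ℕ) : SimpleGraph (Unit ⊕ Fin (q - 1)) :=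
  graphJoin (⊥ : SimpleGraph Unit) (cycleGraph (q - 1))

/-- The star `S_{k+1}` with `k` leaves: a hub joined to `k` independent vertices. -/
def starGraph (k : ℕ) : SimpleGraph (Unit ⊕ Fin k) :=
  graphJoin (⊥ : SimpleGraph Unit) (⊥ : SimpleGraph (Fin k))

/-- `m` pairwise vertex-disjoint copies of `H`. -/
def disjointCopies (m : ℕ) {V : Type*} (H : SimpleGraph V) : SimpleGraph (Fin m × V) :=
  SimpleGraph.fromRel (fun u v => u.1 = v.1 ∧ H.Adj u.2 v.2)

/-- The disjoint union of the family of graphs `G i`. -/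
def disjointSigma {ι : Type*} {V : ι → Type*} (G : ∀ i, SimpleGraph (V i)) :
    SimpleGraph (Σ i, V i) :=
  SimpleGraph.fromRel (fun u v => ∃ h : u.1 = v.1, (G v.1).Adj (h ▸ u.2) v.2)

/-- The Turán number `ex(n, H)`: the maximum number of edges of an `H`-free graph
on `n` vertices. -/
noncomputable def exNum {β : Type*} (n : ℕ) (H : SimpleGraph β) : ℕ :=
  sSup {e | ∃ G : SimpleGraph (Fin n), ¬ Contains G H ∧ Nat.card G.edgeSet = e}

/-! ### Wheels from lists -/

lemma wheelGraph_adj_inl_inr {q : ℕ} (a : Unit) (i : Fin (q - 1)) :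
    (wheelGraph q).Adj (Sum.inl a) (Sum.inr i) := by
  simp [wheelGraph, graphJoin]

lemma wheelGraph_adj_inr_inr {q : ℕ} (i j : Fin (q - 1)) :
    (wheelGraph q).Adj (Sum.inr i) (Sum.inr j) ↔ (cycleGraph (q - 1)).Adj i j := by
  simp only [wheelGraph, graphJoin, fromRel_adj]
  constructor
  · rintro ⟨_, h | h⟩
    · exact h
    · exact h.symm
  · intro h
    exact ⟨fun e => h.ne (Sum.inr.inj e), Or.inl h⟩

lemma wheelGraph_not_adj_inl_inl {q : ℕ} (a b : Unit) :
    ¬ (wheelGraph q).Adj (Sum.inl a) (Sum.inl b) := by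
  simp [wheelGraph, graphJoin]

lemma disjointCopies_adj {m : ℕ} {V : Type*} (H : SimpleGraph V) (u v : Fin m × V) :
    (disjointCopies m H).Adj u v ↔ u.1 = v.1 ∧ H.Adj u.2 v.2 := by
  simp only [disjointCopies, fromRel_adj]
  constructor
  · rintro ⟨_, h | h⟩
    · exact h
    · exact ⟨h.1.symm, h.2.symm⟩
  · intro h
    refine ⟨fun e => h.2.ne (by rw [e]), Or.inl h⟩

/-- `S` contains (the vertex set of) a wheel `W_{2k+1}` of `G`. -/
def WheelIn {V : Type} (G : SimpleGraph V) (k : ℕ) (S : Finset V) : Prop :=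
  ∃ f : wheelGraph (2 * k + 1) →g G, Function.Injective f ∧ ∀ x, f x ∈ S

/-- A closed walk through the list `l` of `2 * k` distinct neighbours of `h` is the rim of a wheel
with hub `h`. -/
lemma wheelIn_of_list {V : Type} [DecidableEq V] (G : SimpleGraph V) {k : ℕ} (h : V) (l : List V)
    (hl : l.length = 2 * k) (hnd : l.Nodup) (z : V) (hz : l.head? = some z)
    (hc : (l ++ [z]).IsChain G.Adj) (hh : ∀ u ∈ l, G.Adj h u) :
    WheelIn G k (insert h l.toFinset) := by
  classical
  have hstep : ∀ i j : Fin (2 * k), (j - i).val = 1 →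
      G.Adj (l[i.1]'(by omega)) (l[j.1]'(by omega)) := by
    intro i j hij
    have hi := i.2
    have hj := j.2
    rw [List.isChain_iff_getElem] at hc
    have := hc i.1 (by simp; omega)
    rw [Fin.val_sub] at hij
    rw [List.getElem_append_left (by omega)] at this
    by_cases hi1 : i.1 + 1 < 2 * k
    · rw [List.getElem_append_left (by omega)] at this
      have e : j.1 = i.1 + 1 := by
        rcases lt_or_ge (2 * k - i.1 + j.1) (2 * k) with h1 | h1
        · rw [Nat.mod_eq_of_lt h1] at hij; omega
        · rw [Nat.mod_eq_sub_mod h1, Nat.mod_eq_of_lt (by omega)] at hij; omega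
      simpa [e] using this
    · rw [List.getElem_append_right (by omega)] at this
      have e : j.1 = 0 := by
        rcases lt_or_ge (2 * k - i.1 + j.1) (2 * k) with h1 | h1
        · rw [Nat.mod_eq_of_lt h1] at hij; omega
        · rw [Nat.mod_eq_sub_mod h1, Nat.mod_eq_of_lt (by omega)] at hij; omega
      have hz' : l[0]'(by omega) = z := by
        rw [List.head?_eq_getElem?, List.getElem?_eq_some_iff] at hz
        exact hz.2
      simp only [e, hz']
      simpa using this
  refine ⟨⟨fun x => match x with
    | Sum.inl _ => h
    | Sum.inr i => l[i.1]'(by have := i.2; omega), ?_⟩, ?_, ?_⟩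
  · rintro (a | i) (b | j) hab
    · exact absurd hab (wheelGraph_not_adj_inl_inl _ _)
    · exact hh _ (List.getElem_mem _)
    · exact (hh _ (List.getElem_mem _)).symm
    · rw [wheelGraph_adj_inr_inr, cycleGraph_adj'] at hab
      rcases hab with hab | hab
      · exact (hstep j i hab).symm
      · exact hstep i j hab
  · rintro (a | i) (b | j) hab
    · rfl
    · exact absurd hab (hh _ (List.getElem_mem _)).ne
    · exact absurd hab.symm (hh _ (List.getElem_mem _)).ne
    · have := (List.Nodup.getElem_inj_iff hnd).1 hab
      rw [Fin.ext this]
  · rintro (a | i)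
    · simp
    · simp

/-- Interleaving a list of spokes `Z` with a list `Q` of paths. -/
def weave {V : Type} : List V → List (List V) → List V
  | z :: Z, q :: Q => z :: (q ++ weave Z Q)
  | _, _ => []

lemma weave_perm {V : Type} : ∀ (Z : List V) (Q : List (List V)), Z.length = Q.length →
    (weave Z Q).Perm (Z ++ Q.flatten)
  | [], [], _ => by simp [weave]
  | z :: Z, q :: Q, h => by
    simp only [weave, List.flatten_cons, List.cons_append, List.perm_cons]
    have := weave_perm Z Q (by simpa using h)
    calc (q ++ weave Z Q).Perm (q ++ (Z ++ Q.flatten)) := this.append_left q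
      _ = (q ++ Z) ++ Q.flatten := by simp
      List.Perm _ ((Z ++ q) ++ Q.flatten) := (List.perm_append_comm).append_right _
      _ = _ := by simp

/-- The interleaving is a path, which can be closed up by a further spoke. -/
lemma weave_chain {V : Type} (G : SimpleGraph V) (z' : V) :
    ∀ (Z : List V) (Q : List (List V)), Z.length = Q.length →
    (∀ q ∈ Q, q ≠ [] ∧ q.IsChain G.Adj) →
    (∀ q ∈ Q, ∀ u ∈ q, G.Adj z' u ∧ ∀ z ∈ Z, G.Adj z u) →
    (weave Z Q ++ [z']).IsChain G.Adj
  | [], [], _, _, _ => by simp [weave]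
  | z :: Z, q :: Q, h, hQ, hA => by
    have ih := weave_chain G z' Z Q (by simpa using h) (fun q' hq' => hQ q' (by simp [hq']))
      (fun q' hq' u hu => ⟨(hA q' (by simp [hq']) u hu).1,
        fun w hw => (hA q' (by simp [hq']) u hu).2 w (by simp [hw])⟩)
    obtain ⟨hne, hch⟩ := hQ q (by simp)
    have hq := hA q (by simp)
    simp only [weave, List.cons_append, List.append_assoc]
    rw [List.isChain_cons, List.isChain_append]
    refine ⟨?_, hch, ih, ?_⟩
    · intro y hy
      rw [List.head?_append_of_ne_nil _ hne] at hy
      exact (hq y (List.mem_of_mem_head? hy)).2 z (by simp)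
    · intro x hx y hy
      have hxq : x ∈ q := List.mem_of_mem_getLast? hx
      have : y = z' ∨ y ∈ Z := by
        cases Z with
        | nil => cases Q <;> simp_all [weave]
        | cons w Z =>
          cases Q with
          | nil => simp at h
          | cons q' Q => simp [weave] at hy; simp [hy]
      rcases this with rfl | hy'
      · exact (hq x hxq).1.symm
      · exact ((hq x hxq).2 y (by simp [hy'])).symm

/-- A hub `h` whose neighbourhood contains spokes `Z` and as many paths `Q`, completely joined
to the spokes, is the hub of a wheel. -/
lemma wheelIn_of_weave {V : Type} [DecidableEq V] (G : SimpleGraph V) {k : ℕ} (hk : 1 ≤ k) (h : V)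
    (Z : List V) (Q : List (List V)) (hZQ : Z.length = Q.length)
    (hlen : Z.length + Q.flatten.length = 2 * k)
    (hnd : (Z ++ Q.flatten).Nodup)
    (hQ : ∀ q ∈ Q, q ≠ [] ∧ q.IsChain G.Adj)
    (hA : ∀ u ∈ Q.flatten, ∀ z ∈ Z, G.Adj z u)
    (hh : ∀ u ∈ Z ++ Q.flatten, G.Adj h u) :
    WheelIn G k (insert h (Z ++ Q.flatten).toFinset) := by
  have hp := weave_perm Z Q hZQ
  cases Z with
  | nil =>
    cases Q with
    | nil => simp at hlen; omega
    | cons q Q => simp at hZQ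
  | cons z Z =>
    cases Q with
    | nil => simp at hZQ
    | cons q Q =>
      rw [← List.toFinset_eq_of_perm _ _ hp]
      refine wheelIn_of_list G h _ (by rw [hp.length_eq, List.length_append, hlen])
        (hp.nodup_iff.2 hnd) z (by simp [weave]) ?_ (fun u hu => hh u (hp.mem_iff.1 hu))
      refine weave_chain G z _ _ hZQ hQ fun q' hq' u hu => ?_
      have hu' : u ∈ (q :: Q).flatten := List.mem_flatten.2 ⟨q', hq', hu⟩
      exact ⟨hA u hu' z (by simp), hA u hu'⟩

lemma WheelIn.mono {V : Type} {G : SimpleGraph V} {k : ℕ} {S T : Finset V} (h : WheelIn G k S)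
    (hST : S ⊆ T) : WheelIn G k T := by
  obtain ⟨f, hf, hS⟩ := h
  exact ⟨f, hf, fun x => hST (hS x)⟩

/-! ### Disjoint copies -/

lemma contains_disjointCopies_succ {V β : Type} {H : SimpleGraph β} {G : SimpleGraph V} {m : ℕ}
    (f : disjointCopies m H →g G) (hf : Function.Injective f)
    (g : H →g G) (hg : Function.Injective g) (hd : ∀ x y, f x ≠ g y) :
    Contains G (disjointCopies (m + 1) H) := by
  refine ⟨⟨fun x => Fin.lastCases (motive := fun _ => V) (g x.2) (fun i => f (i, x.2)) x.1, ?_⟩, ?_⟩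
  · rintro ⟨i, a⟩ ⟨j, b⟩ hab
    rw [disjointCopies_adj] at hab
    obtain ⟨hij, hab⟩ := hab
    simp only at hij hab
    subst hij
    induction i using Fin.lastCases with
    | last => simpa using g.map_adj hab
    | cast i =>
      simp only [Fin.lastCases_castSucc]
      exact f.map_adj ((disjointCopies_adj _ _ _).2 ⟨rfl, hab⟩)
  · rintro ⟨i, a⟩ ⟨j, b⟩ hab
    change Fin.lastCases (motive := fun _ => V) (g a) (fun i => f (i, a)) i =
      Fin.lastCases (motive := fun _ => V) (g b) (fun i => f (i, b)) j at hab
    induction i using Fin.lastCases with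
    | last =>
      induction j using Fin.lastCases with
      | last => simp only [Fin.lastCases_last] at hab; rw [hg hab]
      | cast j => simp only [Fin.lastCases_last, Fin.lastCases_castSucc] at hab
                  exact absurd hab.symm (hd _ _)
    | cast i =>
      induction j using Fin.lastCases with
      | last => simp only [Fin.lastCases_last, Fin.lastCases_castSucc] at hab
                exact absurd hab (hd _ _)
      | cast j =>
        simp only [Fin.lastCases_castSucc] at hab
        have := hf hab
        simp only [Prod.mk.injEq] at this
        rw [this.1, this.2]

lemma contains_one_of_wheelIn {V : Type} {G : SimpleGraph V} {k : ℕ} {S : Finset V}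
    (h : WheelIn G k S) : Contains G (disjointCopies 1 (wheelGraph (2 * k + 1))) := by
  obtain ⟨f, hf, -⟩ := h
  refine ⟨⟨fun x => f x.2, fun {a b} hab => f.map_adj ((disjointCopies_adj _ _ _).1 hab).2⟩, ?_⟩
  rintro ⟨i, a⟩ ⟨j, b⟩ hab
  have : a = b := hf hab
  rw [Subsingleton.elim i j, this]

lemma wheelIn_of_contains_one {V : Type} [Fintype V] [DecidableEq V] {G : SimpleGraph V} {k : ℕ}
    (h : Contains G (disjointCopies 1 (wheelGraph (2 * k + 1)))) :
    ∃ S : Finset V, S.card = 2 * k + 1 ∧ WheelIn G k S := by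
  obtain ⟨f, hf⟩ := h
  let g : wheelGraph (2 * k + 1) →g G :=
    ⟨fun x => f (0, x), fun {a b} hab => f.map_adj ((disjointCopies_adj _ _ _).2 ⟨rfl, hab⟩)⟩
  have hg : Function.Injective g := fun a b hab => by
    have := hf hab
    simpa using this
  refine ⟨Finset.univ.image g, ?_, g, hg, fun x => by simp⟩
  rw [Finset.card_image_of_injective _ hg]
  simp
  omega

/-- `m` disjoint wheels outside `S` together with a wheel inside `S`. -/
lemma contains_succ_of_induce {V : Type} {G : SimpleGraph V} {k m : ℕ} {S : Finset V}
    (h : Contains (G.induce {v | v ∉ S}) (disjointCopies m (wheelGraph (2 * k + 1))))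
    (hT : ∀ F : Finset V, F.card ≤ m * (2 * k + 1) → Disjoint S F →
      ∃ T, WheelIn G k T ∧ Disjoint T F) :
    Contains G (disjointCopies (m + 1) (wheelGraph (2 * k + 1))) := by
  classical
  obtain ⟨f, hf⟩ := h
  let f' : disjointCopies m (wheelGraph (2 * k + 1)) →g G :=
    (Embedding.induce (G := G) {v | v ∉ S}).toHom.comp f
  have hf' : Function.Injective f' := fun a b hab => hf (Subtype.ext hab)
  obtain ⟨T, ⟨g, hg, hgT⟩, hd⟩ := hT (Finset.univ.image f') (by
    refine Finset.card_image_le.trans ?_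
    simp
    rw [Nat.add_comm]) (by
    rw [Finset.disjoint_left]
    intro v hv hv'
    simp only [Finset.mem_image, Finset.mem_univ, true_and] at hv'
    obtain ⟨a, rfl⟩ := hv'
    exact (f a).2 hv)
  refine contains_disjointCopies_succ f' hf' g hg fun x y hxy => ?_
  rw [Finset.disjoint_left] at hd
  exact hd (hgT y) (by rw [← hxy]; simp)

/-! ### Degrees into a set -/

open Classical in
/-- The number of neighbours of `v` in `T`. -/
noncomputable def dg {V : Type} (G : SimpleGraph V) (T : Finset V) (v : V) : ℕ :=
  (T.filter (fun u => G.Adj v u)).card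

open Classical in
/-- The neighbours of `v` in `T`. -/
noncomputable def nb {V : Type} (G : SimpleGraph V) (T : Finset V) (v : V) : Finset V :=
  T.filter (fun u => G.Adj v u)

lemma card_nb {V : Type} (G : SimpleGraph V) (T : Finset V) (v : V) : (nb G T v).card = dg G T v :=
  rfl

lemma mem_nb {V : Type} {G : SimpleGraph V} {T : Finset V} {v u : V} :
    u ∈ nb G T v ↔ u ∈ T ∧ G.Adj v u := by simp [nb]

lemma dg_le_card {V : Type} (G : SimpleGraph V) (T : Finset V) (v : V) : dg G T v ≤ T.card := by
  classical
  exact Finset.card_filter_le _ _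

lemma dg_mono {V : Type} (G : SimpleGraph V) {S T : Finset V} (h : S ⊆ T) (v : V) :
    dg G S v ≤ dg G T v := by
  classical
  exact Finset.card_le_card (Finset.filter_subset_filter _ h)

lemma dg_union_le {V : Type} [DecidableEq V] (G : SimpleGraph V) (S T : Finset V) (v : V) :
    dg G (S ∪ T) v ≤ dg G S v + dg G T v := by
  classical
  unfold dg
  rw [Finset.filter_union]
  convert Finset.card_union_le _ _

lemma dg_disjUnion {V : Type} [DecidableEq V] (G : SimpleGraph V) {S T : Finset V}
    (h : Disjoint S T) (v : V) :
    dg G (S ∪ T) v = dg G S v + dg G T v := by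
  classical
  unfold dg
  rw [Finset.filter_union, ← Finset.card_union_of_disjoint (Finset.disjoint_filter_filter h)]

lemma sum_dg_comm {V : Type} (G : SimpleGraph V) (S T : Finset V) :
    ∑ v ∈ S, dg G T v = ∑ u ∈ T, dg G S u := by
  classical
  have := Finset.sum_card_bipartiteAbove_eq_sum_card_bipartiteBelow (s := S) (t := T) G.Adj
  simp only [Finset.bipartiteAbove, Finset.bipartiteBelow] at this
  unfold dg
  rw [this]
  refine Finset.sum_congr rfl fun u _ => ?_
  simp only [G.adj_comm u]

lemma two_mul_edges {V : Type} [Fintype V] (G : SimpleGraph V) :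
    2 * Nat.card G.edgeSet = ∑ v, dg G Finset.univ v := by
  classical
  rw [Nat.card_eq_fintype_card, ← edgeFinset_card, ← sum_degrees_eq_twice_card_edges]
  refine Finset.sum_congr rfl fun v _ => ?_
  rw [← card_neighborFinset_eq_degree, dg]
  congr 1
  ext u
  simp

lemma two_mul_edges_induce {V : Type} [Fintype V] [DecidableEq V] (G : SimpleGraph V)
    (S : Finset V) :
    2 * Nat.card (G.induce {v | v ∉ S}).edgeSet = ∑ v ∈ Sᶜ, dg G Sᶜ v := by
  classical
  rw [two_mul_edges]
  rw [← Finset.sum_coe_sort (Sᶜ)]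
  refine Fintype.sum_equiv (Equiv.subtypeEquivRight (by simp)) _ _ fun v => ?_
  unfold dg
  refine Finset.card_bij (fun a _ => a.1) ?_ ?_ ?_
  · intro a ha
    have := a.2
    simp at ha ⊢
    exact ⟨this, ha⟩
  · intro a _ b _ h
    exact Subtype.ext h
  · intro b hb
    simp at hb
    exact ⟨⟨b, hb.1⟩, by simpa using hb.2, rfl⟩

/-- Deleting `S` removes at most as many edges as the sum of the degrees in `S`. -/
lemma edges_le_induce_add {V : Type} [Fintype V] [DecidableEq V] (G : SimpleGraph V)
    (S : Finset V) :
    Nat.card G.edgeSet ≤ Nat.card (G.induce {v | v ∉ S}).edgeSet +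
      ∑ v ∈ S, dg G Finset.univ v := by
  have h1 := two_mul_edges G
  have h2 := two_mul_edges_induce G S
  have h3 : ∀ v, dg G Finset.univ v = dg G S v + dg G Sᶜ v := fun v => by
    rw [← dg_disjUnion G (disjoint_compl_right), Finset.union_compl]
  rw [← Finset.sum_add_sum_compl S] at h1
  have h4 : ∑ v ∈ Sᶜ, dg G Finset.univ v = ∑ v ∈ Sᶜ, dg G S v + ∑ v ∈ Sᶜ, dg G Sᶜ v := by
    rw [← Finset.sum_add_distrib]
    exact Finset.sum_congr rfl fun v _ => h3 v
  rw [sum_dg_comm G Sᶜ S] at h4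
  have h5 : ∑ v ∈ S, dg G Sᶜ v ≤ ∑ v ∈ S, dg G Finset.univ v :=
    Finset.sum_le_sum fun v _ => dg_mono G (Finset.subset_univ _) v
  omega

lemma card_induce {V : Type} [Fintype V] [DecidableEq V] (S : Finset V) :
    Fintype.card {v : V | v ∉ S} = Fintype.card V - S.card := by
  classical
  have : Fintype.card {v : V | v ∉ S} = (Sᶜ).card := by
    rw [← Fintype.card_coe]
    exact Fintype.card_congr (Equiv.subtypeEquivRight (by simp))
  rw [this, Finset.card_compl]

/-! ### Complete bipartite subgraphs of dense graphs -/

/-- Kővári–Sós–Turán in a weak form: between sets of at most `n` vertices, at least `n ^ 2 / q`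
edges force a complete bipartite graph with `k` vertices on each side, for large `n`. -/
lemma exists_biclique {V : Type} (G : SimpleGraph V) (k q n : ℕ) (hk : 1 ≤ k) (hq : 1 ≤ q)
    (X Y : Finset V) (hX : X.card ≤ n) (hY : Y.card ≤ n)
    (hn : 4 * q * (2 ^ (4 * q * k) * k + 1) ≤ n) (hn' : 8 * q * q * k ≤ n)
    (h : n * n ≤ q * ∑ x ∈ X, dg G Y x) :
    ∃ X' ⊆ X, ∃ Y' ⊆ Y, X'.card = k ∧ Y'.card = k ∧ ∀ x ∈ X', ∀ y ∈ Y', G.Adj x y := by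
  classical
  have hn0 : 0 < n := lt_of_lt_of_le (by positivity) hn
  -- many vertices of `X` have large degree into `Y`
  set X1 := X.filter (fun x => n ≤ 2 * q * dg G Y x) with hX1
  have hX1c : 4 * q * k ≤ X1.card := by
    have h1 : 2 * q * ∑ x ∈ X, dg G Y x ≤ ∑ x ∈ X, (n + if n ≤ 2 * q * dg G Y x then 2 * q * n else 0) := by
      rw [Finset.mul_sum]
      refine Finset.sum_le_sum fun x _ => ?_
      split_ifs with hx
      · have := (dg_le_card G Y x).trans hY
        calc 2 * q * dg G Y x ≤ 2 * q * n := Nat.mul_le_mul_left _ this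
          _ ≤ _ := by omega
      · omega
    rw [Finset.sum_add_distrib, ← Finset.sum_filter, Finset.sum_const, Finset.sum_const] at h1
    simp only [smul_eq_mul] at h1
    rw [← hX1] at h1
    have h2 : X.card * n ≤ n * n := Nat.mul_le_mul_right _ hX
    have h3 : n * n ≤ n * (2 * q * X1.card) := by
      have : 2 * (n * n) ≤ 2 * (q * ∑ x ∈ X, dg G Y x) := by omega
      nlinarith
    have h4 := Nat.le_of_mul_le_mul_left h3 hn0
    by_contra hlt
    push Not at hlt
    have : 2 * q * X1.card < 2 * q * (4 * q * k) := Nat.mul_lt_mul_of_pos_left hlt (by omega)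
    nlinarith
  obtain ⟨S, hSX, hSc⟩ := Finset.exists_subset_card_eq hX1c
  -- many vertices of `Y` have at least `k` neighbours in `S`
  have h5 : 2 * k * n ≤ ∑ y ∈ Y, dg G S y := by
    rw [← sum_dg_comm]
    have : ∑ x ∈ S, n ≤ ∑ x ∈ S, 2 * q * dg G Y x :=
      Finset.sum_le_sum fun x hx => (Finset.mem_filter.1 (hSX hx)).2
    rw [← Finset.mul_sum, Finset.sum_const, smul_eq_mul, hSc] at this
    have h6 : 2 * q * (2 * k * n) ≤ 2 * q * ∑ x ∈ S, dg G Y x := by nlinarith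
    exact Nat.le_of_mul_le_mul_left h6 (by omega)
  set Y1 := Y.filter (fun y => k ≤ dg G S y) with hY1
  have hY1c : 2 ^ (4 * q * k) * k < Y1.card := by
    have h1 : ∑ y ∈ Y, dg G S y ≤ ∑ y ∈ Y, (k + if k ≤ dg G S y then 4 * q * k else 0) := by
      refine Finset.sum_le_sum fun y _ => ?_
      have := dg_le_card G S y
      split_ifs <;> omega
    rw [Finset.sum_add_distrib, ← Finset.sum_filter, Finset.sum_const, Finset.sum_const] at h1
    simp only [smul_eq_mul] at h1
    have h2 : Y.card * k ≤ n * k := Nat.mul_le_mul_right _ hY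
    have h3 : k * n ≤ k * (4 * q * Y1.card) := by
      have : Y1.card * (4 * q * k) = k * (4 * q * Y1.card) := by ring
      rw [← hY1, this] at h1
      nlinarith
    have h4 := Nat.le_of_mul_le_mul_left h3 hk
    have h6 := Nat.le_of_mul_le_mul_left (hn.trans h4) (by omega)
    omega
  -- choose for each such vertex a `k`-subset of its neighbourhood in `S`
  have hch : ∀ y : V, ∃ T : Finset V, T ⊆ S ∧ (y ∈ Y1 → T.card = k ∧ ∀ x ∈ T, G.Adj x y) := by
    intro y
    by_cases hy : y ∈ Y1
    · obtain ⟨T, hT, hTc⟩ := Finset.exists_subset_card_eq (Finset.mem_filter.1 hy).2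
      refine ⟨T, hT.trans (Finset.filter_subset _ _), fun _ => ⟨hTc, fun x hx => ?_⟩⟩
      exact (Finset.mem_filter.1 (hT hx)).2.symm
    · exact ⟨∅, by simp, fun h => absurd h hy⟩
  choose T hTS hT using hch
  obtain ⟨X', hX', hlt⟩ := Finset.exists_lt_card_fiber_of_mul_lt_card_of_maps_to
    (s := Y1) (t := S.powerset) (f := T) (n := k) (fun y _ => Finset.mem_powerset.2 (hTS y))
    (by rw [Finset.card_powerset, hSc]; exact hY1c)
  obtain ⟨Y', hY', hY'c⟩ := Finset.exists_subset_card_eq hlt.le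
  have hne : 0 < Y'.card := by omega
  obtain ⟨y0, hy0⟩ := Finset.card_pos.1 hne
  have key : ∀ y ∈ Y', y ∈ Y1 ∧ T y = X' := fun y hy => Finset.mem_filter.1 (hY' hy)
  refine ⟨X', (Finset.mem_powerset.1 hX').trans (hSX.trans (Finset.filter_subset _ _)), Y', ?_, ?_,
    hY'c, ?_⟩
  · exact fun y hy => (Finset.mem_filter.1 (key y hy).1).1
  · rw [← (key y0 hy0).2]; exact (hT y0 (key y0 hy0).1).1
  · intro x hx y hy
    rw [← (key y hy).2] at hx
    exact (hT y (key y hy).1).2 x hx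

lemma wheelIn_of_biclique {V : Type} [DecidableEq V] (G : SimpleGraph V) {k : ℕ} (hk : 1 ≤ k)
    (h : V) (X Y : Finset V) (hX : X.card = k) (hY : Y.card = k)
    (hXY : ∀ x ∈ X, ∀ y ∈ Y, G.Adj x y) (hhX : ∀ x ∈ X, G.Adj h x) (hhY : ∀ y ∈ Y, G.Adj h y) :
    WheelIn G k (insert h (X ∪ Y)) := by
  have hfl : (Y.toList.map (fun y => [y])).flatten = Y.toList := by
    induction Y.toList with
    | nil => rfl
    | cons a l ih => simp [ih]
  refine (wheelIn_of_weave G hk h X.toList (Y.toList.map (fun y => [y])) ?_ ?_ ?_ ?_ ?_ ?_).mono ?_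
  · simp [hX, hY]
  · rw [hfl]; simp [hX, hY]; omega
  · rw [hfl, List.nodup_append]
    refine ⟨X.nodup_toList, Y.nodup_toList, ?_⟩
    intro a ha b hb hab
    subst hab
    exact (hXY a (by simpa using ha) a (by simpa using hb)).ne rfl
  · intro q hq
    simp only [List.mem_map] at hq
    obtain ⟨y, -, rfl⟩ := hq
    simp
  · rw [hfl]
    intro u hu z hz
    exact hXY z (by simpa using hz) u (by simpa using hu)
  · rw [hfl]
    intro u hu
    simp at hu
    rcases hu with hu | hu
    · exact hhX u hu
    · exact hhY u hu
  · rw [hfl]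
    intro u
    simp

/-! ### The extremal function -/

/-- The largest number of edges of a complete bipartite graph with classes of `p` and `n - p` vertices
together with `⌊(k - 1) p / 2⌋` edges inside the first class and one further edge. -/
def oneWheel (k n : ℕ) : ℕ :=
  (Finset.Icc 1 n).sup (fun p => p * (n - p) + (k - 1) * p / 2 + 1)

/-- The value `oneWheel` after adding `r` dominating vertices, `n` being the final number of
vertices. -/
def exF (k : ℕ) : ℕ → ℕ → ℕ
  | 0, n => oneWheel k n
  | r + 1, n => (n - 1) + exF k r (n - 1)

lemma le_oneWheel {k n p : ℕ} (h1 : 1 ≤ p) (h2 : p ≤ n) :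
    p * (n - p) + (k - 1) * p / 2 + 1 ≤ oneWheel k n :=
  Finset.le_sup (f := fun p => p * (n - p) + (k - 1) * p / 2 + 1) (Finset.mem_Icc.2 ⟨h1, h2⟩)

lemma oneWheel_bounds {k : ℕ} (hk : 1 ≤ k) (n : ℕ) (hn : 1 ≤ n) :
    (n : ℤ) ^ 2 + (k - 1) * n - k ^ 2 - 4 ≤ 4 * (oneWheel k n : ℤ) ∧
    4 * (oneWheel k n : ℤ) ≤ n ^ 2 + (k - 1) * n + (k ^ 2 + 4) := by
  obtain ⟨j, rfl⟩ : ∃ j, k = j + 1 := ⟨k - 1, by omega⟩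
  constructor
  · have h := le_oneWheel (k := j + 1) (n := n) (p := (n + 1) / 2) (by omega) (by omega)
    set p := (n + 1) / 2 with hp
    simp only [Nat.add_sub_cancel] at h
    have hfl : j * p ≤ 2 * (j * p / 2) + 1 := by omega
    obtain ⟨s, hs⟩ : ∃ s, n = p + s := ⟨n - p, by omega⟩
    have hps : p = s ∨ p = s + 1 := by omega
    rw [show n - p = s by omega] at h
    clear_value p
    generalize j * p / 2 = f at h hfl
    subst hs
    zify at h hfl
    push_cast
    have hj : (0 : ℤ) ≤ j := by positivity
    rcases hps with e | e
    · subst e; nlinarith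
    · subst e; push_cast at *; nlinarith
  · have h : (oneWheel (j + 1) n) * 4 ≤ n ^ 2 + j * n + ((j + 1) ^ 2 + 4) := by
      obtain ⟨p, hp, he⟩ := Finset.exists_mem_eq_sup (Finset.Icc 1 n) ⟨1, by simp [hn]⟩
        (fun p => p * (n - p) + ((j + 1) - 1) * p / 2 + 1)
      rw [oneWheel, he]
      simp only [Nat.add_sub_cancel]
      have hp2 := (Finset.mem_Icc.1 hp).2
      obtain ⟨s, hs⟩ : ∃ s, n = p + s := ⟨n - p, by omega⟩
      rw [show n - p = s by omega]
      have hfl : 2 * (j * p / 2) ≤ j * p := by omega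
      zify at *
      rw [hs]
      nlinarith [sq_nonneg ((p : ℤ) - s - j), sq_nonneg ((p : ℤ) - s)]
    zify at h
    push_cast
    linarith

/-- The extremal function is `n ^ 2 / 4 + (2 r + k - 1) n / 4` up to a constant. -/
lemma exF_bounds {k : ℕ} (hk : 1 ≤ k) (r : ℕ) : ∃ C : ℕ, ∀ n : ℕ, r + 1 ≤ n →
    (n : ℤ) ^ 2 + (2 * r + k - 1) * n - C ≤ 4 * (exF k r n : ℤ) ∧
    4 * (exF k r n : ℤ) ≤ n ^ 2 + (2 * r + k - 1) * n + C := by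
  induction r with
  | zero =>
    refine ⟨k ^ 2 + 4, fun n hn => ?_⟩
    have := oneWheel_bounds hk n hn
    simp only [exF]
    push_cast
    constructor <;> linarith [this.1, this.2]
  | succ r ih =>
    obtain ⟨C, hC⟩ := ih
    refine ⟨C + 2 * r + k + 3, fun n hn => ?_⟩
    obtain ⟨s, rfl⟩ : ∃ s, n = s + 1 := ⟨n - 1, by omega⟩
    have := hC s (by omega)
    simp only [exF, Nat.add_sub_cancel]
    push_cast
    constructor <;> nlinarith [this.1, this.2]

lemma exF_closed (k r n : ℕ) (hn : r + 1 ≤ n) :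
    exF k r n = r.choose 2 + r * (n - r) + oneWheel k (n - r) := by
  induction r generalizing n with
  | zero => simp [exF]
  | succ r ih =>
    rw [exF, ih _ (by omega), Nat.choose_succ_succ r 1]
    obtain ⟨s, rfl⟩ : ∃ s, n = s + r + 1 := ⟨n - r - 1, by omega⟩
    simp only [Nat.choose_one_right]
    rw [show s + r + 1 - 1 - r = s by omega, show s + r + 1 - (r + 1) = s by omega,
      show s + r + 1 - 1 = s + r by omega, show (1 : ℕ).succ = 2 from rfl]
    ring

lemma statement_sup_eq (k r n : ℕ) (hn : r + 1 ≤ n) :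
    (Finset.Icc 1 (n - r)).sup (fun p =>
          r.choose 2 + (k - 1) * p / 2 + (p + r) * (n - r) - p ^ 2 + 1) = exF k r n := by
  rw [exF_closed k r n hn, oneWheel]
  have hterm : ∀ p ∈ Finset.Icc 1 (n - r),
      r.choose 2 + (k - 1) * p / 2 + (p + r) * (n - r) - p ^ 2 + 1 =
      r.choose 2 + r * (n - r) + (p * (n - r - p) + (k - 1) * p / 2 + 1) := by
    intro p hp
    obtain ⟨s, hs⟩ : ∃ s, n - r = p + s := ⟨n - r - p, by have := (Finset.mem_Icc.1 hp).2; omega⟩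
    rw [hs, Nat.add_sub_cancel_left]
    have : (p + r) * (p + s) = p ^ 2 + (p * s + r * (p + s)) := by ring
    rw [this]
    omega
  rw [Finset.sup_congr rfl hterm]
  have hne : (Finset.Icc 1 (n - r)).Nonempty := ⟨1, by simp; omega⟩
  apply le_antisymm
  · exact Finset.sup_le fun p hp => Nat.add_le_add_left (Finset.le_sup (f := fun p =>
      p * (n - r - p) + (k - 1) * p / 2 + 1) hp) _
  · obtain ⟨p, hp, he⟩ := Finset.exists_mem_eq_sup _ hne
      (fun p => p * (n - r - p) + (k - 1) * p / 2 + 1)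
    rw [he]
    exact Finset.le_sup (f := fun p => r.choose 2 + r * (n - r) +
      (p * (n - r - p) + (k - 1) * p / 2 + 1)) hp

lemma contains_of_induce {V β : Type} {G : SimpleGraph V} {s : Set V} {H : SimpleGraph β}
    (h : Contains (G.induce s) H) : Contains G H := by
  obtain ⟨f, hf⟩ := h
  exact ⟨(Embedding.induce (G := G) s).toHom.comp f, fun a b hab => hf (Subtype.ext hab)⟩

/-! ### Reduction to large minimum degree -/

/-- To bound the number of edges of large `H`-free graphs by `F`, graphs in which every degree is at
least `F n - F (n - 1)` suffice: as long as a vertex of smaller degree exists, deleting it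
reduces the excess of the number of edges over `F`, and on `n1` vertices the excess is at most
`n1 ^ 2`. -/
lemma reduce_minDegree {β : Type} (H : SimpleGraph β) (F : ℕ → ℕ) (n1 : ℕ)
    (h : ∀ (V : Type) [Fintype V] (G : SimpleGraph V), n1 ≤ Fintype.card V →
      ¬ Contains G H →
      (∀ v, F (Fintype.card V) ≤ F (Fintype.card V - 1) + dg G Finset.univ v) →
      Nat.card G.edgeSet ≤ F (Fintype.card V)) :
    ∃ n0, ∀ (V : Type) [Fintype V] (G : SimpleGraph V), n0 ≤ Fintype.card V →
      ¬ Contains G H → Nat.card G.edgeSet ≤ F (Fintype.card V) := by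
  classical
  have key : ∀ (t : ℕ) (V : Type) [Fintype V] (G : SimpleGraph V), Fintype.card V = n1 + t →
      ¬ Contains G H → Nat.card G.edgeSet ≤ F (n1 + t) + (n1 * n1 - t) := by
    intro t
    induction t with
    | zero =>
      intro V _ G hV _
      have h1 := two_mul_edges G
      have h2 : ∑ v, dg G Finset.univ v ≤ ∑ v : V, n1 := Finset.sum_le_sum fun v _ => by
        have := dg_le_card G Finset.univ v
        rw [Finset.card_univ, hV] at this
        exact this
      rw [Finset.sum_const, Finset.card_univ, hV, smul_eq_mul] at h2
      simp only [Nat.add_zero] at h2 ⊢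
      omega
    | succ t ih =>
      intro V _ G hV hG
      by_cases hdeg : ∀ v, F (Fintype.card V) ≤ F (Fintype.card V - 1) + dg G Finset.univ v
      · have := h V G (by omega) hG hdeg
        rw [hV] at this
        omega
      · push Not at hdeg
        obtain ⟨v, hv⟩ := hdeg
        have h1 := edges_le_induce_add G {v}
        have h2 := ih {u : V | u ∉ ({v} : Finset V)} (G.induce {u | u ∉ ({v} : Finset V)})
          (by rw [card_induce, hV]; simp) (fun hc => hG (contains_of_induce hc))
        rw [Finset.sum_singleton] at h1
        rw [hV, show n1 + (t + 1) - 1 = n1 + t by omega] at hv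
        omega
  refine ⟨n1 + n1 * n1, fun V _ G hV hG => ?_⟩
  have := key (Fintype.card V - n1) V G (by omega) hG
  rw [show n1 + (Fintype.card V - n1) = Fintype.card V by omega] at this
  omega

/-! ### Vertices of large degree -/

/-- If all degrees are at least `n / 2 - C / 2`, then a vertex of degree at least
`n / 2 + n / q` is the hub of a wheel avoiding any given set of at most `t` other vertices: its
neighbourhood induces a dense graph. -/
lemma exists_wheel_of_large_degree (k C q t : ℕ) (hk : 1 ≤ k) (hq : 1 ≤ q) :
    ∃ n1, ∀ (V : Type) [Fintype V] (G : SimpleGraph V), n1 ≤ Fintype.card V →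
      (∀ v, Fintype.card V ≤ 2 * dg G Finset.univ v + C) →
      ∀ v, (q + 2) * Fintype.card V ≤ 2 * q * dg G Finset.univ v →
      ∀ F : Finset V, F.card ≤ t → v ∉ F → ∃ T, WheelIn G k T ∧ Disjoint T F := by
  classical
  refine ⟨4 * (8 * q) * (2 ^ (4 * (8 * q) * k) * k + 1) + 8 * (8 * q) * (8 * q) * k +
    q * C + 2 * q * t + 4 * t, fun V _ G hn hdeg v hv F hF hvF => ?_⟩
  set n := Fintype.card V with hnV
  set X := nb G Finset.univ v \ F with hX
  have hXc : dg G Finset.univ v ≤ X.card + t := by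
    have := Finset.le_card_sdiff F (nb G Finset.univ v)
    rw [card_nb, ← hX] at this
    omega
  have hXn : X.card ≤ n := Finset.card_le_univ X
  have hdX : ∀ u, n ≤ 2 * q * dg G X u := by
    intro u
    have h1 : dg G Finset.univ u = dg G X u + dg G Xᶜ u := by
      rw [← dg_disjUnion G (disjoint_compl_right), Finset.union_compl]
    have h2 := dg_le_card G Xᶜ u
    rw [Finset.card_compl] at h2
    have h3 := hdeg u
    have h4 : dg G Finset.univ v + dg G Finset.univ u ≤ dg G X u + n + t := by omega
    have h5 : 2 * q * (dg G Finset.univ v + dg G Finset.univ u) ≤ 2 * q * (dg G X u + n + t) :=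
      Nat.mul_le_mul_left _ h4
    have h6 : q * n ≤ q * (2 * dg G Finset.univ u + C) := Nat.mul_le_mul_left _ h3
    have h7 : q * C + 2 * q * t ≤ n := by omega
    nlinarith
  have hX4 : n ≤ 4 * X.card := by
    have h2 : q * n ≤ q * (2 * dg G Finset.univ v) := by nlinarith
    have h3 := Nat.le_of_mul_le_mul_left h2 (by omega)
    omega
  have hsum : n * n ≤ 8 * q * ∑ x ∈ X, dg G X x := by
    have h1 : ∑ x ∈ X, n ≤ ∑ x ∈ X, 2 * q * dg G X x := Finset.sum_le_sum fun x _ => hdX x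
    rw [← Finset.mul_sum, Finset.sum_const, smul_eq_mul] at h1
    have h2 : n * n ≤ 4 * X.card * n := Nat.mul_le_mul_right _ hX4
    nlinarith
  obtain ⟨X', hX', Y', hY', hX'c, hY'c, hXY⟩ := exists_biclique G k (8 * q) n hk (by omega) X X
    hXn hXn (by omega) (by omega) hsum
  refine ⟨_, wheelIn_of_biclique G hk v X' Y' hX'c hY'c hXY
    (fun x hx => (mem_nb.1 (Finset.mem_sdiff.1 (hX' hx)).1).2)
    (fun x hx => (mem_nb.1 (Finset.mem_sdiff.1 (hY' hx)).1).2), ?_⟩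
  rw [Finset.disjoint_left]
  intro u hu
  rw [Finset.mem_insert, Finset.mem_union] at hu
  rcases hu with rfl | hu | hu
  · exact hvF
  · exact (Finset.mem_sdiff.1 (hX' hu)).2
  · exact (Finset.mem_sdiff.1 (hY' hu)).2

/-! ### Induction on the number of wheels -/

/-- The upper bound for `r + 1` disjoint wheels in sufficiently large graphs. -/
def UpperBound (k r : ℕ) : Prop :=
  ∃ n0, ∀ (V : Type) [Fintype V] (G : SimpleGraph V), n0 ≤ Fintype.card V →
    ¬ Contains G (disjointCopies (r + 1) (wheelGraph (2 * k + 1))) →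
    Nat.card G.edgeSet ≤ exF k r (Fintype.card V)

lemma dg_lt_card {V : Type} [Fintype V] (G : SimpleGraph V) (v : V) :
    dg G Finset.univ v + 1 ≤ Fintype.card V := by
  classical
  have : nb G Finset.univ v ⊂ Finset.univ := by
    rw [Finset.ssubset_univ_iff]
    intro h
    have : v ∈ nb G Finset.univ v := by rw [h]; simp
    exact (mem_nb.1 this).2.ne rfl
  have := Finset.card_lt_card this
  rw [card_nb, Finset.card_univ] at this
  exact this

/-- The minimum degree condition supplied by `reduce_minDegree` forces degrees of almost `n / 2`. -/
lemma minDegree_of_exF {k : ℕ} (hk : 1 ≤ k) (r : ℕ) : ∃ C : ℕ, ∀ n d : ℕ, r + 2 ≤ n →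
    exF k r n ≤ exF k r (n - 1) + d → n ≤ 2 * d + C := by
  obtain ⟨C, hC⟩ := exF_bounds hk r
  refine ⟨C + 1, fun n d hn h => ?_⟩
  obtain ⟨s, rfl⟩ : ∃ s, n = s + 1 := ⟨n - 1, by omega⟩
  have h1 := (hC (s + 1) (by omega)).1
  have h2 := (hC s (by omega)).2
  simp only [Nat.add_sub_cancel] at h
  zify at h hk ⊢
  push_cast at h1
  nlinarith

/-- Deleting a vertex of large degree or a whole wheel reduces `r + 2` wheels to `r + 1` wheels. -/
lemma upperBound_succ {k : ℕ} (hk : 1 ≤ k) (r : ℕ) (h0 : UpperBound k 0) (hr : UpperBound k r) :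
    UpperBound k (r + 1) := by
  classical
  obtain ⟨n0, h0⟩ := h0
  obtain ⟨nr, hr⟩ := hr
  obtain ⟨C00, hC00⟩ := exF_bounds hk 0
  obtain ⟨C0, hC0⟩ := exF_bounds hk r
  obtain ⟨C1, hC1⟩ := exF_bounds hk (r + 1)
  obtain ⟨C, hC⟩ := minDegree_of_exF hk (r + 1)
  obtain ⟨n2, hn2⟩ := exists_wheel_of_large_degree k C (8 * k + 4) ((r + 1) * (2 * k + 1)) hk
    (by omega)
  refine reduce_minDegree _ (exF k (r + 1)) (n0 + nr + n2 + C00 + C0 + C1 + (2 * k + 1) ^ 2 + r + 3 +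
    (2 * k + 1)) fun V _ G hn hG hdeg => ?_
  set n := Fintype.card V with hnV
  have hmin : ∀ v, n ≤ 2 * dg G Finset.univ v + C := fun v => hC n _ (by omega) (hdeg v)
  by_cases hbig : ∃ v, (8 * k + 4 + 2) * n ≤ 2 * (8 * k + 4) * dg G Finset.univ v
  · obtain ⟨v, hv⟩ := hbig
    have h1 := edges_le_induce_add G {v}
    have h2 := hr {u : V | u ∉ ({v} : Finset V)} (G.induce {u | u ∉ ({v} : Finset V)})
      (by rw [card_induce]; simp; omega) (fun hc => hG (contains_succ_of_induce hc fun F hF hd =>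
        hn2 V G (by omega) hmin v hv F hF (by simpa using hd)))
    rw [Finset.sum_singleton] at h1
    rw [card_induce, Finset.card_singleton, ← hnV] at h2
    have h3 := dg_lt_card G v
    simp only [exF]
    omega
  · push Not at hbig
    by_cases hW : Contains G (disjointCopies 1 (wheelGraph (2 * k + 1)))
    · -- no degree is large, so deleting a wheel loses too few edges
      by_contra he
      obtain ⟨S, hSc, hS⟩ := wheelIn_of_contains_one hW
      have h1 := edges_le_induce_add G S
      have h2 := hr {u : V | u ∉ S} (G.induce {u | u ∉ S})
        (by rw [card_induce, hSc]; omega) (fun hc => hG (contains_succ_of_induce hc fun F hF hd =>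
          ⟨S, hS, hd⟩))
      rw [card_induce, hSc] at h2
      have h3 : ∑ v ∈ S, 2 * (8 * k + 4) * dg G Finset.univ v ≤ ∑ v ∈ S, (8 * k + 4 + 2) * n :=
        Finset.sum_le_sum fun v _ => (hbig v).le
      rw [← Finset.mul_sum, Finset.sum_const, hSc, smul_eq_mul] at h3
      rw [← hnV] at h2
      obtain ⟨s, hs⟩ : ∃ s, n = s + (2 * k + 1) := ⟨n - (2 * k + 1), by omega⟩
      have h4 := (hC0 s (by omega)).2
      have h5 := (hC1 n (by omega)).1
      rw [hs, Nat.add_sub_cancel] at h2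
      have h6 : exF k (r + 1) n < exF k r s + ∑ v ∈ S, dg G Finset.univ v := by omega
      have h7 : ((C0 + C1 + (2 * k + 1) ^ 2 + r + 3 : ℕ) : ℤ) ≤ n := by exact_mod_cast (by omega)
      generalize ∑ v ∈ S, dg G Finset.univ v = sd at *
      zify at h3 h6
      rw [hs] at h3 h5 h6 h7
      push_cast at *
      generalize (exF k r s : ℤ) = x at *
      generalize (exF k (r + 1) (s + (2 * k + 1)) : ℤ) = y at *
      have h8 : (s + (2 * k + 1) : ℤ) ^ 2 + (2 * (r + 1) + k - 1) * (s + (2 * k + 1)) - C1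
          < (s : ℤ) ^ 2 + (2 * r + k - 1) * s + C0 + 4 * sd := by nlinarith
      have h9 : 4 * sd ≤ (4 * k + 3) * (s + (2 * k + 1) : ℤ) := by
        refine le_of_mul_le_mul_left (a := (4 * k + 2 : ℤ)) ?_ (by positivity)
        linarith
      have hkr : (0 : ℤ) ≤ r * (2 * k + 1) := by positivity
      zify at hk
      nlinarith
    · exact (h0 V G (by omega) hW).trans (by
        have h1 := (hC00 n (by omega)).2
        have h2 := (hC1 n (by omega)).1
        have h3 : ((C00 + C1 : ℕ) : ℤ) ≤ n := by exact_mod_cast (by omega)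
        push_cast at *
        have : (4 * exF k 0 n : ℤ) ≤ 4 * exF k (r + 1) n := by nlinarith
        exact_mod_cast (by linarith : (exF k 0 n : ℤ) ≤ exF k (r + 1) n))

/-! ### Embedding wheels in nearly complete bipartite graphs -/

/-- A wheel-free graph which between `A` and `B` is complete up to at most `D` missing edges at
each vertex. Both classes are large compared with `k` and `D`. -/
structure NearBip {V : Type} (G : SimpleGraph V) (k D : ℕ) (A B : Finset V) : Prop where
  disj : Disjoint A B
  noWheel : ∀ S, ¬ WheelIn G k S
  missA : ∀ x ∈ A, B.card ≤ dg G B x + D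
  missB : ∀ y ∈ B, A.card ≤ dg G A y + D
  bigA : (k + 1) * D + 2 * k ≤ A.card
  bigB : (k + 1) * D + 2 * k ≤ B.card

lemma NearBip.symm {V : Type} {G : SimpleGraph V} {k D : ℕ} {A B : Finset V}
    (P : NearBip G k D A B) : NearBip G k D B A :=
  ⟨P.disj.symm, P.noWheel, P.missB, P.missA, P.bigB, P.bigA⟩

open Classical in
/-- The vertices of `B` which are not adjacent to every vertex of `X`. -/
noncomputable def missed {V : Type} (G : SimpleGraph V) (B X : Finset V) : Finset V :=
  B.filter (fun u => ¬ ∀ x ∈ X, G.Adj x u)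

lemma card_missed_le {V : Type} {G : SimpleGraph V} {D : ℕ} {B X : Finset V}
    (h : ∀ x ∈ X, B.card ≤ dg G B x + D) : (missed G B X).card ≤ X.card * D := by
  classical
  have : missed G B X ⊆ X.biUnion (fun x => B \ nb G B x) := by
    intro u hu
    simp only [missed, Finset.mem_filter, not_forall] at hu
    obtain ⟨hu, x, hx, hxu⟩ := hu
    simp only [Finset.mem_biUnion, Finset.mem_sdiff, mem_nb]
    exact ⟨x, hx, hu, fun h => hxu h.2⟩
  refine (Finset.card_le_card this).trans (Finset.card_biUnion_le_card_mul _ _ _ fun x hx => ?_)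
  have hs : nb G B x ⊆ B := fun u hu => (mem_nb.1 hu).1
  rw [Finset.card_sdiff_of_subset hs, card_nb]
  have := h x hx
  omega

lemma adj_of_notMem_missed {V : Type} {G : SimpleGraph V} {B X : Finset V} {u x : V} (hu : u ∈ B)
    (h : u ∉ missed G B X) (hx : x ∈ X) : G.Adj x u := by
  classical
  simp only [missed, Finset.mem_filter, not_and, not_not] at h
  exact h hu x hx

lemma missed_subset {V : Type} {G : SimpleGraph V} {B X : Finset V} : missed G B X ⊆ B := by
  classical
  exact Finset.filter_subset _ _

/-- A vertex `x` of `A` with `j` neighbours `Z` in `A`, together with suitable paths `Q` in `B`, is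
completed to a wheel with hub `x` by filling the remaining gaps of the rim with single vertices
of `B`. -/
lemma NearBip.wheel {V : Type} [DecidableEq V] {G : SimpleGraph V} {k D : ℕ} {A B : Finset V}
    (P : NearBip G k D A B) (hk : 1 ≤ k) {x : V} (hx : x ∈ A) (Z : Finset V) (hZ : Z ⊆ nb G A x)
    (hZk : Z.card ≤ k)
    (Q : List (List V)) (hQ : ∀ q ∈ Q, q ≠ [] ∧ q.IsChain G.Adj) (hnd : Q.flatten.Nodup)
    (hQB : ∀ u ∈ Q.flatten, u ∈ B ∧ u ∉ missed G B (insert x Z))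
    (hl : Q.length ≤ Z.card) (hlen : Q.flatten.length + 2 * Z.card = 2 * k + Q.length) : False := by
  classical
  have hZA : insert x Z ⊆ A := Finset.insert_subset hx fun z hz => (mem_nb.1 (hZ hz)).1
  have hc : (insert x Z).card ≤ k + 1 := (Finset.card_insert_le _ _).trans (by omega)
  have hm : (missed G B (insert x Z)).card ≤ (k + 1) * D :=
    (card_missed_le fun y hy => P.missA y (hZA hy)).trans (Nat.mul_le_mul_right _ hc)
  set R := B \ (missed G B (insert x Z) ∪ Q.flatten.toFinset) with hR
  have hRc : Z.card - Q.length ≤ R.card := by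
    have h1 := Finset.le_card_sdiff (missed G B (insert x Z) ∪ Q.flatten.toFinset) B
    have h2 := Finset.card_union_le (missed G B (insert x Z)) Q.flatten.toFinset
    have h3 := Q.flatten.toFinset_card_le
    have h4 := P.bigB
    rw [← hR] at h1
    omega
  obtain ⟨W, hWR, hW⟩ := Finset.exists_subset_card_eq hRc
  have hfl : (W.toList.map (fun y => [y])).flatten = W.toList := by
    induction W.toList with
    | nil => rfl
    | cons a l ih => simp [ih]
  have hWp : ∀ u ∈ W, u ∈ B ∧ u ∉ missed G B (insert x Z) ∧ u ∉ Q.flatten := by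
    intro u hu
    have := hWR hu
    simp only [hR, Finset.mem_sdiff, Finset.mem_union, not_or, List.mem_toFinset] at this
    exact this
  have hfl2 : (Q ++ W.toList.map (fun y => [y])).flatten = Q.flatten ++ W.toList := by
    rw [List.flatten_append, hfl]
  have hall : ∀ u ∈ Q.flatten ++ W.toList, u ∈ B ∧ u ∉ missed G B (insert x Z) := by
    intro u hu
    rcases List.mem_append.1 hu with hu | hu
    · exact hQB u hu
    · have := hWp u (Finset.mem_toList.1 hu)
      exact ⟨this.1, this.2.1⟩
  refine P.noWheel _ (wheelIn_of_weave G hk x Z.toList (Q ++ W.toList.map (fun y => [y]))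
    ?_ ?_ ?_ ?_ ?_ ?_)
  · simp [hW]; omega
  · rw [hfl2]; simp only [List.length_append, Finset.length_toList]; omega
  · rw [hfl2, List.nodup_append]
    refine ⟨Z.nodup_toList, ?_, ?_⟩
    · rw [List.nodup_append]
      refine ⟨hnd, W.nodup_toList, ?_⟩
      rintro a ha b hb rfl
      exact (hWp a (Finset.mem_toList.1 hb)).2.2 ha
    · rintro a ha b hb rfl
      exact Finset.disjoint_left.1 P.disj
        (hZA (Finset.mem_insert_of_mem (Finset.mem_toList.1 ha))) (hall a hb).1
  · intro q hq
    rcases List.mem_append.1 hq with hq | hq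
    · exact hQ q hq
    · obtain ⟨y, -, rfl⟩ := List.mem_map.1 hq
      simp
  · rw [hfl2]
    intro u hu z hz
    have := hall u hu
    exact adj_of_notMem_missed this.1 this.2 (Finset.mem_insert_of_mem (Finset.mem_toList.1 hz))
  · rw [hfl2]
    intro u hu
    rcases List.mem_append.1 hu with hu | hu
    · exact (mem_nb.1 (hZ (Finset.mem_toList.1 hu))).2
    · have := hall u hu
      exact adj_of_notMem_missed this.1 this.2 (Finset.mem_insert_self _ _)

lemma exists_nbrs {V : Type} (G : SimpleGraph V) {A : Finset V} {x : V} {j : ℕ}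
    (h : j ≤ dg G A x) : ∃ Z ⊆ nb G A x, Z.card = j :=
  Finset.exists_subset_card_eq (by rwa [card_nb])

/-- Otherwise `k` neighbours in `A` and `k` single vertices of `B` form the rim of a wheel. -/
lemma NearBip.degA {V : Type} {G : SimpleGraph V} {k D : ℕ} {A B : Finset V}
    (P : NearBip G k D A B) (hk : 1 ≤ k) : ∀ x ∈ A, dg G A x ≤ k - 1 := by
  classical
  intro x hx
  by_contra h
  obtain ⟨Z, hZ, hZc⟩ := exists_nbrs G (j := k) (by omega : k ≤ dg G A x)
  exact P.wheel hk hx Z hZ hZc.le [] (by simp) (by simp) (by simp) (by simp) (by simp [hZc])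

open Classical in
/-- The number of vertices of `A` with at least `i` neighbours in `A`. -/
noncomputable def cnt {V : Type} (G : SimpleGraph V) (A : Finset V) (i : ℕ) : ℕ :=
  (A.filter (fun x => i ≤ dg G A x)).card

lemma sum_dg_le_cnt {V : Type} {G : SimpleGraph V} {A : Finset V} {k i : ℕ}
    (h : ∀ x ∈ A, dg G A x ≤ k - 1) (hi : 1 ≤ i) :
    ∑ x ∈ A, dg G A x ≤ (i - 1) * A.card + (k - 1) * cnt G A i := by
  classical
  have : ∀ x ∈ A, dg G A x ≤ (i - 1) + (k - 1) * if i ≤ dg G A x then 1 else 0 := by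
    intro x hx
    have := h x hx
    split_ifs <;> omega
  refine (Finset.sum_le_sum this).trans ?_
  rw [Finset.sum_add_distrib, ← Finset.mul_sum, Finset.sum_boole, Finset.sum_const, cnt]
  simp [mul_comm]

/-- As degrees inside `A` are bounded, many vertices of degree at least `i` in `A` yield one whose
closed neighbourhood avoids a given small set. -/
lemma exists_star {V : Type} {G : SimpleGraph V} {A F : Finset V} {k i : ℕ} (hk : 1 ≤ k)
    (h : ∀ x ∈ A, dg G A x ≤ k - 1) (hF : F ⊆ A) (hc : k * F.card < cnt G A i) :
    ∃ x ∈ A, i ≤ dg G A x ∧ x ∉ F ∧ ∀ u ∈ nb G A x, u ∉ F := by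
  classical
  have h1 : (F ∪ F.biUnion (nb G A)).card ≤ k * F.card := by
    refine (Finset.card_union_le _ _).trans ?_
    have := Finset.card_biUnion_le_card_mul F (nb G A) (k - 1) fun x hx => h x (hF hx)
    obtain ⟨k, rfl⟩ := Nat.exists_eq_add_of_le' hk
    simp only [Nat.add_sub_cancel] at this
    linarith
  obtain ⟨x, hx, hxF⟩ := Finset.exists_mem_notMem_of_card_lt_card (h1.trans_lt hc)
  simp only [Finset.mem_filter] at hx
  simp only [Finset.mem_union, Finset.mem_biUnion, not_or, not_exists, not_and] at hxF
  exact ⟨x, hx.1, hx.2, hxF.1, fun u hu huF => hxF.2 u huF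
    (mem_nb.2 ⟨hx.1, (mem_nb.1 hu).2.symm⟩)⟩

/-- Pairwise disjoint paths with `i + 1` vertices in `A`, for `i = 1, 2`, avoiding a given set. -/
lemma exists_paths {V : Type} {G : SimpleGraph V} {A : Finset V} {k i : ℕ} (hk : 1 ≤ k)
    (h : ∀ x ∈ A, dg G A x ≤ k - 1) (hi : i = 1 ∨ i = 2) (t : ℕ) : ∀ F ⊆ A,
    k * (F.card + t * (i + 1)) < cnt G A i + k * (i + 1) → ∃ Q : List (List V), Q.length = t ∧
      (∀ q ∈ Q, q ≠ [] ∧ q.IsChain G.Adj) ∧ Q.flatten.Nodup ∧ Q.flatten.length = t * (i + 1) ∧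
      ∀ u ∈ Q.flatten, u ∈ A ∧ u ∉ F := by
  classical
  induction t with
  | zero => exact fun F _ _ => ⟨[], by simp⟩
  | succ t ih =>
    intro F hF hc
    obtain ⟨x, hx, hxi, hxF, hxn⟩ := exists_star (i := i) hk h hF (by
      have := Nat.zero_le (k * (t * (i + 1))); nlinarith)
    obtain ⟨q, hq0, hqc, hqn, hql, hqA⟩ : ∃ q : List V, q ≠ [] ∧ q.IsChain G.Adj ∧ q.Nodup ∧
        q.length = i + 1 ∧ ∀ u ∈ q, u ∈ A ∧ u ∉ F := by
      rcases hi with rfl | rfl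
      · obtain ⟨Z, hZ, hZc⟩ := exists_nbrs G hxi
        obtain ⟨u, rfl⟩ := Finset.card_eq_one.1 hZc
        have hu := hZ (Finset.mem_singleton_self u)
        have hu' := mem_nb.1 hu
        refine ⟨[x, u], by simp, by simpa using hu'.2, by simpa using hu'.2.ne, rfl, ?_⟩
        simp only [List.mem_cons, List.not_mem_nil, or_false]
        rintro w (rfl | rfl)
        exacts [⟨hx, hxF⟩, ⟨hu'.1, hxn _ hu⟩]
      · obtain ⟨Z, hZ, hZc⟩ := exists_nbrs G hxi
        obtain ⟨u, v, huv, rfl⟩ := Finset.card_eq_two.1 hZc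
        have hu := hZ (Finset.mem_insert_self u _)
        have hv := hZ (Finset.mem_insert_of_mem (Finset.mem_singleton_self v))
        have hu' := mem_nb.1 hu
        have hv' := mem_nb.1 hv
        refine ⟨[u, x, v], by simp, by simpa using ⟨hu'.2.symm, hv'.2⟩, by
          simpa using ⟨⟨hu'.2.ne', huv⟩, hv'.2.ne⟩, rfl, ?_⟩
        simp only [List.mem_cons, List.not_mem_nil, or_false]
        rintro w (rfl | rfl | rfl)
        exacts [⟨hu'.1, hxn _ hu⟩, ⟨hx, hxF⟩, ⟨hv'.1, hxn _ hv⟩]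
    obtain ⟨Q, hQl, hQ, hQn, hQf, hQA⟩ := ih (F ∪ q.toFinset)
      (Finset.union_subset hF fun u hu => (hqA u (List.mem_toFinset.1 hu)).1) (by
        have h1 := Finset.card_union_le F q.toFinset
        have h2 := q.toFinset_card_le
        refine (Nat.mul_le_mul_left k ?_).trans_lt hc
        rw [add_mul]; omega)
    refine ⟨q :: Q, by simp [hQl], ?_, ?_, ?_, ?_⟩
    · intro p hp
      rcases List.mem_cons.1 hp with rfl | hp
      exacts [⟨hq0, hqc⟩, hQ p hp]
    · rw [List.flatten_cons, List.nodup_append]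
      refine ⟨hqn, hQn, ?_⟩
      rintro a ha b hb rfl
      have := (hQA a hb).2
      simp [ha] at this
    · rw [List.flatten_cons, List.length_append, hql, hQf]; ring
    · intro u hu
      rw [List.flatten_cons, List.mem_append] at hu
      rcases hu with hu | hu
      · exact hqA u hu
      · have := hQA u hu
        exact ⟨this.1, fun h => this.2 (Finset.mem_union_left _ h)⟩

/-! ### Degrees inside the two sides -/

/-- A threshold above which a set of vertices cannot be met by the few exceptional vertices. -/
def bigK (k D : ℕ) : ℕ := 10 * k ^ 2 * (D + 1)

section
variable {V : Type} {G : SimpleGraph V} {k D : ℕ} {A B : Finset V}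

/-- If suitable paths exist in `B`, then few vertices of `A` have `j` neighbours in `A`. -/
lemma NearBip.cnt_le (P : NearBip G k D A B) (hk : 1 ≤ k) {j : ℕ} (hj : 1 ≤ j) (hjk : j ≤ k)
    (Q : List (List V)) (hQ : ∀ q ∈ Q, q ≠ [] ∧ q.IsChain G.Adj) (hnd : Q.flatten.Nodup)
    (hQB : ∀ u ∈ Q.flatten, u ∈ B)
    (hl : Q.length ≤ j) (hlen : Q.flatten.length + 2 * j = 2 * k + Q.length) :
    cnt G A j ≤ bigK k D := by
  classical
  by_contra hc
  have hB : ∀ y ∈ Q.flatten.toFinset, y ∈ B := fun y hy => hQB y (List.mem_toFinset.1 hy)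
  have h1 := card_missed_le (X := Q.flatten.toFinset) fun y hy => P.missB y (hB y hy)
  have h2 := Q.flatten.toFinset_card_le
  have h3 : (missed G A Q.flatten.toFinset).card ≤ 2 * k * D :=
    h1.trans (Nat.mul_le_mul_right _ (by omega))
  obtain ⟨x, hx, hxj, hxF, hxn⟩ := exists_star (i := j) hk (P.degA hk)
    (missed_subset (G := G) (B := A) (X := Q.flatten.toFinset))
    (lt_of_le_of_lt ((Nat.mul_le_mul_left k h3).trans (by unfold bigK; nlinarith [Nat.zero_le (k^2*D), Nat.zero_le (k^2)]))
      (not_le.1 hc))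
  obtain ⟨Z, hZ, hZc⟩ := exists_nbrs G hxj
  refine P.wheel hk hx Z hZ (by omega) Q hQ hnd (fun u hu => ⟨hQB u hu, fun hum => ?_⟩)
    (by omega) (by omega)
  simp only [missed, Finset.mem_filter, not_forall] at hum
  obtain ⟨-, z, hz, hzu⟩ := hum
  refine hzu ?_
  rcases Finset.mem_insert.1 hz with rfl | hz
  · exact (adj_of_notMem_missed hx hxF (List.mem_toFinset.2 hu)).symm
  · exact (adj_of_notMem_missed (mem_nb.1 (hZ hz)).1 (hxn z (hZ hz)) (List.mem_toFinset.2 hu)).symm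

lemma exists_path_three (hA : ∃ y ∈ B, 2 ≤ dg G B y) :
    ∃ u x v, [u, x, v].IsChain G.Adj ∧ [u, x, v].Nodup ∧ u ∈ B ∧ x ∈ B ∧ v ∈ B := by
  classical
  obtain ⟨x, hx, hxi⟩ := hA
  obtain ⟨Z, hZ, hZc⟩ := exists_nbrs G hxi
  obtain ⟨u, v, huv, rfl⟩ := Finset.card_eq_two.1 hZc
  have hu' := mem_nb.1 (hZ (Finset.mem_insert_self u _))
  have hv' := mem_nb.1 (hZ (Finset.mem_insert_of_mem (Finset.mem_singleton_self v)))
  exact ⟨u, x, v, by simpa using ⟨hu'.2.symm, hv'.2⟩, by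
    simpa using ⟨⟨hu'.2.ne', huv⟩, hv'.2.ne⟩, hu'.1, hx, hv'.1⟩

/-- Two edges inside `B` already exclude many vertices of degree `k - 1` inside `A`. -/
lemma NearBip.cnt_pred_le (P : NearBip G k D A B) (hk : 3 ≤ k)
    (hB : 3 ≤ ∑ y ∈ B, dg G B y) : cnt G A (k - 1) ≤ bigK k D := by
  classical
  by_cases h2 : ∃ y ∈ B, 2 ≤ dg G B y
  · obtain ⟨u, x, v, hc, hn, hu, hx, hv⟩ := exists_path_three h2
    refine P.cnt_le (by omega) (by omega) (by omega) [[u, x, v]] ?_ ?_ ?_ ?_ ?_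
    · simpa using hc
    · simpa using hn
    · simp [hu, hx, hv]
    · simp; omega
    · simp; omega
  · push Not at h2
    have hcard : 3 ≤ (B.filter (fun y => 1 ≤ dg G B y)).card := by
      refine hB.trans ?_
      rw [Finset.card_filter]
      refine Finset.sum_le_sum fun y hy => ?_
      have := h2 y hy
      split_ifs <;> omega
    obtain ⟨y, hy⟩ : (B.filter (fun y => 1 ≤ dg G B y)).Nonempty := by
      rw [← Finset.card_pos]; omega
    simp only [Finset.mem_filter] at hy
    obtain ⟨Z, hZ, hZc⟩ := exists_nbrs G hy.2
    obtain ⟨u, rfl⟩ := Finset.card_eq_one.1 hZc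
    have hu := mem_nb.1 (hZ (Finset.mem_singleton_self u))
    obtain ⟨w, hw, hwn⟩ := Finset.exists_mem_notMem_of_card_lt_card
      (s := {y, u}) ((Finset.card_le_two).trans_lt hcard)
    simp only [Finset.mem_filter] at hw
    simp only [Finset.mem_insert, Finset.mem_singleton, not_or] at hwn
    obtain ⟨Z', hZ', hZc'⟩ := exists_nbrs G hw.2
    obtain ⟨z, rfl⟩ := Finset.card_eq_one.1 hZc'
    have hz := mem_nb.1 (hZ' (Finset.mem_singleton_self z))
    -- all degrees are at most one, so the edges `yu` and `wz` are disjoint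
    have huniq : ∀ v ∈ B, ∀ a ∈ nb G B v, ∀ b ∈ nb G B v, a = b := fun v hv a ha b hb =>
      Finset.card_le_one.1 (by have := h2 v hv; rw [card_nb]; omega) a ha b hb
    have hzy : z ≠ y := by
      rintro rfl
      exact hwn.2 (huniq z hz.1 w (mem_nb.2 ⟨hw.1, hz.2.symm⟩) u (mem_nb.2 hu))
    have hzu : z ≠ u := by
      rintro rfl
      exact hwn.1 (huniq z hz.1 w (mem_nb.2 ⟨hw.1, hz.2.symm⟩) y (mem_nb.2 ⟨hy.1, hu.2.symm⟩))
    refine P.cnt_le (by omega) (by omega) (by omega) [[y, u], [w, z]] ?_ ?_ ?_ ?_ ?_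
    · simp [hu.2, hz.2]
    · have h1 := hu.2.ne
      have h2 := hz.2.ne
      have h3 := hwn.1
      have h4 := hwn.2
      simp only [List.flatten_cons, List.flatten_nil, List.cons_append, List.nil_append,
        List.append_nil, List.nodup_cons, List.mem_cons, List.not_mem_nil, or_false, not_or,
        not_false_eq_true, List.nodup_nil, and_true]
      exact ⟨⟨h1, Ne.symm h3, hzy.symm⟩, ⟨Ne.symm h4, hzu.symm⟩, h2⟩
    · simp [hu.1, hy.1, hw.1, hz.1]
    · simp; omega
    · simp; omega

/-- Many non-isolated vertices inside `B` force degrees at most `k - 2` inside `A`. -/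
lemma NearBip.degA_le_of_cnt_one (P : NearBip G k D A B) (hk : 3 ≤ k)
    (hB : bigK k D < cnt G B 1) : ∀ x ∈ A, dg G A x ≤ k - 2 := by
  classical
  intro x hx
  by_contra h
  obtain ⟨Z, hZ, hZc⟩ := exists_nbrs G (j := k - 1) (by omega : k - 1 ≤ dg G A x)
  have hZA : insert x Z ⊆ A := Finset.insert_subset hx fun z hz => (mem_nb.1 (hZ hz)).1
  have hm : (missed G B (insert x Z)).card ≤ k * D :=
    (card_missed_le fun y hy => P.missA y (hZA hy)).trans (Nat.mul_le_mul_right _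
      ((Finset.card_insert_le _ _).trans (by omega)))
  obtain ⟨Q, hQl, hQ, hQn, hQf, hQB⟩ := exists_paths (i := 1) (k := k) (by omega)
    (P.symm.degA (by omega)) (Or.inl rfl) 2 _ (missed_subset (G := G) (B := B) (X := insert x Z))
    (by
      have := Nat.mul_le_mul_left k hm
      unfold bigK at hB
      nlinarith [Nat.zero_le (k^2*D), Nat.zero_le (k^2)])
  exact P.wheel (by omega) hx Z hZ (by omega) Q hQ hQn hQB (by omega) (by omega)

/-- Many vertices of degree at least two inside `A` force small degrees inside `B`. -/
lemma NearBip.two_mul_degB_le (P : NearBip G k D A B) (hk : 3 ≤ k)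
    (hA : bigK k D < cnt G A 2) : ∀ y ∈ B, 2 * dg G B y ≤ k - 1 := by
  classical
  intro y hy
  by_contra h
  obtain ⟨Z, hZ, hZc⟩ := exists_nbrs G (j := (k + 1) / 2) (by omega : (k + 1) / 2 ≤ dg G B y)
  have hZB : insert y Z ⊆ B := Finset.insert_subset hy fun z hz => (mem_nb.1 (hZ hz)).1
  have hm : (missed G A (insert y Z)).card ≤ k * D :=
    (card_missed_le fun y hy => P.missB y (hZB hy)).trans (Nat.mul_le_mul_right _
      ((Finset.card_insert_le _ _).trans (by omega)))
  obtain ⟨Q, hQl, hQ, hQn, hQf, hQA⟩ := exists_paths (i := 2) (k := k) (by omega)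
    (P.degA (by omega)) (Or.inr rfl) (k - (k + 1) / 2) _
    (missed_subset (G := G) (B := A) (X := insert y Z))
    (by
      have h1 : (missed G A (insert y Z)).card + (k - (k + 1) / 2) * (2 + 1) ≤ k * D + k * 3 :=
        Nat.add_le_add hm (Nat.mul_le_mul_right _ (by omega))
      have := Nat.mul_le_mul_left k h1
      unfold bigK at hA
      nlinarith [Nat.zero_le (k^2*D), Nat.zero_le (k^2)])
  exact P.symm.wheel (by omega) hy Z hZ (by omega) Q hQ hQn hQA (by omega) (by omega)

/-- A path on three vertices inside `B`, together with two further disjoint edges there, excludes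
many vertices of degree `k - 2` inside `A`. -/
lemma NearBip.cnt_sub_two_le (P : NearBip G k D A B) (hk : 5 ≤ k) (h2 : ∃ y ∈ B, 2 ≤ dg G B y)
    (hB : bigK k D < cnt G B 1) : cnt G A (k - 2) ≤ bigK k D := by
  classical
  obtain ⟨u, x, v, hc, hn, hu, hx, hv⟩ := exists_path_three h2
  have hF : [u, x, v].toFinset ⊆ B := by
    intro w hw
    simp only [List.mem_toFinset, List.mem_cons, List.not_mem_nil, or_false] at hw
    rcases hw with rfl | rfl | rfl <;> assumption
  have hFc := [u, x, v].toFinset_card_le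
  obtain ⟨Q, hQl, hQ, hQn, hQf, hQB⟩ := exists_paths (i := 1) (k := k) (by omega)
    (P.symm.degA (by omega)) (Or.inl rfl) 2 _ hF
    (by
      have := Nat.mul_le_mul_left k hFc
      simp only [List.length_cons, List.length_nil] at this
      unfold bigK at hB
      nlinarith [Nat.zero_le (k^2*D), Nat.zero_le (k^2)])
  refine P.cnt_le (by omega) (by omega) (by omega) ([u, x, v] :: Q) ?_ ?_ ?_ ?_ ?_
  · intro q hq
    rcases List.mem_cons.1 hq with rfl | hq
    exacts [⟨by simp, hc⟩, hQ q hq]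
  · rw [List.flatten_cons, List.nodup_append]
    refine ⟨hn, hQn, ?_⟩
    rintro a ha b hb rfl
    exact (hQB a hb).2 (List.mem_toFinset.2 ha)
  · intro w hw
    rw [List.flatten_cons, List.mem_append] at hw
    rcases hw with hw | hw
    exacts [hF (List.mem_toFinset.2 hw), (hQB w hw).1]
  · simp [hQl]; omega
  · rw [List.flatten_cons, List.length_append, hQf]; simp [hQl]; omega

lemma exists_of_sum_gt (h : A.card < ∑ x ∈ A, dg G A x) : ∃ x ∈ A, 2 ≤ dg G A x := by
  by_contra hc
  push Not at hc
  have := Finset.sum_le_card_nsmul A (fun x => dg G A x) 1 fun x hx => by have := hc x hx; omega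
  rw [smul_eq_mul, mul_one] at this
  omega

/-- Suppose the bound fails. Then each side contains at least two edges, so degree `k - 1` is rare on
both sides, and hence both sides have many non-isolated vertices. Thus all inner degrees are at
most `k - 2`, and both sides contain a path on three vertices. For `k ≥ 5` this makes degree
`k - 2` rare too, so both sides have many vertices of degree at least two; then all inner degrees
are at most `(k - 1) / 2`, which contradicts the failure of the bound. -/
lemma NearBip.sum_le (P : NearBip G k D A B) (hk : 3 ≤ k) {M : ℕ} (hA : A.card ≤ M)
    (hB : B.card ≤ M) (hM : 4 * k * (bigK k D + 1) ≤ M) :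
    ∑ x ∈ A, dg G A x + ∑ y ∈ B, dg G B y ≤ (k - 1) * M + 2 := by
  by_contra hc
  push Not at hc
  set K := bigK k D with hK
  have dA := P.degA (by omega)
  have dB := P.symm.degA (by omega)
  obtain ⟨j, rfl⟩ : ∃ j, k = j + 3 := ⟨k - 3, by omega⟩
  have cA := fun i (hi : 1 ≤ i) => sum_dg_le_cnt (i := i) dA hi
  have cB := fun i (hi : 1 ≤ i) => sum_dg_le_cnt (i := i) dB hi
  have e1 : j + 3 - 1 = j + 2 := rfl
  have e2 : j + 2 - 1 = j + 1 := rfl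
  simp only [e1] at hc dA dB cA cB
  have hjA := Nat.mul_le_mul_left j hA
  have hjB := Nat.mul_le_mul_left j hB
  have sA : ∑ x ∈ A, dg G A x ≤ (j + 2) * A.card := by
    rw [mul_comm]; exact Finset.sum_le_card_nsmul A _ _ dA
  have sB : ∑ x ∈ B, dg G B x ≤ (j + 2) * B.card := by
    rw [mul_comm]; exact Finset.sum_le_card_nsmul B _ _ dB
  have hA3 : 3 ≤ ∑ x ∈ A, dg G A x := by by_contra h; linarith
  have hB3 : 3 ≤ ∑ x ∈ B, dg G B x := by by_contra h; linarith
  generalize hSA : ∑ x ∈ A, dg G A x = SA at *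
  generalize hSB : ∑ x ∈ B, dg G B x = SB at *
  have f2A := P.cnt_pred_le hk (hSB ▸ hB3)
  have f2B := P.symm.cnt_pred_le hk (hSA ▸ hA3)
  rw [e1, ← hK] at f2A f2B
  have hjK := Nat.zero_le (j * K)
  have n1B : K < cnt G B 1 := by
    by_contra h
    have h1 := cA (j + 2) (by omega)
    have h2 := cB 1 le_rfl
    rw [Nat.sub_self, zero_mul, zero_add] at h2
    rw [e2] at h1
    have h3 := Nat.mul_le_mul_left (j + 2) f2A
    have h4 := Nat.mul_le_mul_left (j + 2) (not_lt.1 h)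
    linarith
  have n1A : K < cnt G A 1 := by
    by_contra h
    have h1 := cB (j + 2) (by omega)
    have h2 := cA 1 le_rfl
    rw [Nat.sub_self, zero_mul, zero_add] at h2
    rw [e2] at h1
    have h3 := Nat.mul_le_mul_left (j + 2) f2B
    have h4 := Nat.mul_le_mul_left (j + 2) (not_lt.1 h)
    linarith
  have f1A := P.degA_le_of_cnt_one hk n1B
  have f1B := P.symm.degA_le_of_cnt_one hk n1A
  rw [show j + 3 - 2 = j + 1 by rfl] at f1A f1B
  have sA' : SA ≤ (j + 1) * A.card := by
    rw [mul_comm, ← hSA]; exact Finset.sum_le_card_nsmul A _ _ f1A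
  have sB' : SB ≤ (j + 1) * B.card := by
    rw [mul_comm, ← hSB]; exact Finset.sum_le_card_nsmul B _ _ f1B
  have n2A : ∃ x ∈ A, 2 ≤ dg G A x := exists_of_sum_gt (by rw [hSA]; linarith)
  have n2B : ∃ x ∈ B, 2 ≤ dg G B x := exists_of_sum_gt (by rw [hSB]; linarith)
  rcases Nat.lt_or_ge j 2 with hj | hj
  · obtain ⟨x, hx, hx2⟩ := n2A
    obtain ⟨y, hy, hy2⟩ := n2B
    have hxj := f1A x hx
    have hj1 : j = 1 := by omega
    subst hj1
    -- here `k = 4`, and a path on three vertices needs degree `2 > (k - 1) / 2`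
    by_cases h2A : K < cnt G A 2
    · have := P.two_mul_degB_le hk h2A y hy
      omega
    · by_cases h2B : K < cnt G B 2
      · have := P.symm.two_mul_degB_le hk h2B x hx
        omega
      · have h1 := cA 2 (by omega)
        have h2 := cB 2 (by omega)
        omega
  · have f3A := P.cnt_sub_two_le (by omega) n2B n1B
    have f3B := P.symm.cnt_sub_two_le (by omega) n2A n1A
    have e3 : j + 3 - 2 = j + 1 := rfl
    rw [e3, ← hK] at f3A f3B
    have h1A := cA (j + 1) (by omega)
    have h1B := cB (j + 1) (by omega)
    rw [Nat.add_sub_cancel] at h1A h1B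
    have h3A := Nat.mul_le_mul_left (j + 2) f3A
    have h3B := Nat.mul_le_mul_left (j + 2) f3B
    have h2A : K < cnt G A 2 := by
      by_contra h
      have h2 := cA 2 (by omega)
      have h4 := Nat.mul_le_mul_left (j + 2) (not_lt.1 h)
      linarith
    have h2B : K < cnt G B 2 := by
      by_contra h
      have h2 := cB 2 (by omega)
      have h4 := Nat.mul_le_mul_left (j + 2) (not_lt.1 h)
      linarith
    have f4B := P.two_mul_degB_le hk h2A
    have f4A := P.symm.two_mul_degB_le hk h2B
    rw [e1] at f4A f4B
    have tA : 2 * SA ≤ (j + 2) * A.card := by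
      rw [mul_comm (j + 2), ← hSA, Finset.mul_sum]; exact Finset.sum_le_card_nsmul A _ _ f4A
    have tB : 2 * SB ≤ (j + 2) * B.card := by
      rw [mul_comm (j + 2), ← hSB, Finset.mul_sum]; exact Finset.sum_le_card_nsmul B _ _ f4B
    linarith
end

/-! ### Stability: wheel-free graphs of large minimum degree are nearly complete bipartite -/

section
variable {V : Type} [Fintype V] [DecidableEq V] {G : SimpleGraph V} {k C s : ℕ}

lemma dg_add_compl (S : Finset V) (v : V) : dg G S v + dg G Sᶜ v = dg G Finset.univ v := by
  rw [← dg_disjUnion G disjoint_compl_right, Finset.union_compl]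

/-- The neighbourhood `B` of a vertex and its complement: few edges lie inside the two sets, and few
pairs between them are non-adjacent. -/
lemma rough_partition (hk : 1 ≤ k) (hW : ∀ S, ¬ WheelIn G k S)
    (q : ℕ) (hq : 1 ≤ q)
    (hn : 4 * q * (2 ^ (4 * q * k) * k + 1) + 8 * q * q * k + q * C ≤ Fintype.card V)
    (hmin : ∀ v, Fintype.card V ≤ 2 * dg G Finset.univ v + C)
    (hmax : ∀ v, 2 * q * dg G Finset.univ v ≤ (q + 2) * Fintype.card V) :
    ∃ B : Finset V, q * ∑ x ∈ B, dg G B x ≤ Fintype.card V ^ 2 ∧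
      q * ∑ x ∈ Bᶜ, dg G Bᶜ x ≤ 3 * Fintype.card V ^ 2 ∧
      q * (Bᶜ.card * B.card) ≤ q * ∑ x ∈ Bᶜ, dg G B x + 2 * Fintype.card V ^ 2 := by
  set n := Fintype.card V with hnV
  have hn0 : 0 < n := lt_of_lt_of_le (by positivity) ((Nat.le_add_right _ _).trans
    ((Nat.le_add_right _ _).trans hn))
  obtain ⟨v⟩ : Nonempty V := Fintype.card_pos_iff.1 hn0
  set B := nb G Finset.univ v with hB
  have hBn : B.card ≤ n := Finset.card_le_univ B
  have hab : Bᶜ.card + B.card = n := by rw [add_comm]; exact Finset.card_add_card_compl B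
  have hb : n ≤ 2 * B.card + C := hmin v
  have h1 : q * ∑ x ∈ B, dg G B x ≤ n ^ 2 := by
    by_contra h
    obtain ⟨X, hX, Y, hY, hXc, hYc, hXY⟩ := exists_biclique G k q n hk hq B B hBn hBn
      (by omega) (by omega) (by rw [← pow_two]; omega)
    exact hW _ (wheelIn_of_biclique G hk v X Y hXc hYc hXY
      (fun x hx => (mem_nb.1 (hX hx)).2) (fun y hy => (mem_nb.1 (hY hy)).2))
  have h2 : B.card * n ≤ 2 * (∑ x ∈ B, dg G B x + ∑ x ∈ B, dg G Bᶜ x) + B.card * C := by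
    rw [← Finset.sum_add_distrib, Finset.mul_sum, ← smul_eq_mul, ← Finset.sum_const,
      ← smul_eq_mul B.card C, ← Finset.sum_const, ← Finset.sum_add_distrib]
    exact Finset.sum_le_sum fun x _ => by rw [dg_add_compl]; exact hmin x
  have h3 : 2 * q * (∑ x ∈ Bᶜ, dg G B x + ∑ x ∈ Bᶜ, dg G Bᶜ x) ≤ Bᶜ.card * ((q + 2) * n) := by
    rw [← Finset.sum_add_distrib, Finset.mul_sum, ← smul_eq_mul Bᶜ.card, ← Finset.sum_const]
    exact Finset.sum_le_sum fun x _ => by rw [dg_add_compl]; exact hmax x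
  rw [sum_dg_comm G B Bᶜ] at h2
  refine ⟨B, h1, ?_, ?_⟩
  all_goals
    generalize ∑ x ∈ B, dg G B x = s1 at *
    generalize ∑ x ∈ Bᶜ, dg G B x = s2 at *
    generalize ∑ x ∈ Bᶜ, dg G Bᶜ x = s3 at *
    generalize Bᶜ.card = a at *
    generalize B.card = b at *
    have hqC : q * C ≤ n := by omega
    have h4 := Nat.mul_le_mul_left q h2
    have h5 : b * (q * C) ≤ n * n := Nat.mul_le_mul hBn hqC
    have h5' : n * (q * C) ≤ n * n := Nat.mul_le_mul le_rfl hqC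
    have h6 := Nat.mul_le_mul_left (q * n) hb
    have h7 : a * n ≤ n * n := Nat.mul_le_mul (by omega) le_rfl
    have h8 : q * a ≤ q * b + n := by
      have : a ≤ b + C := by omega
      have := Nat.mul_le_mul_left q this
      rw [mul_add] at this; omega
    have h9 := Nat.mul_le_mul_left n h8
    have h10 := Nat.mul_le_mul_left b h8
    have h11 : b * n ≤ n * n := Nat.mul_le_mul hBn le_rfl
    have h12 := Nat.mul_le_mul_left (q * b) (show 2 * a ≤ n + C by omega)
    linarith

/-- A vertex with linearly many neighbours on both sides would be the hub of a wheel. -/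
lemma not_both_large (hk : 1 ≤ k) (hW : ∀ S, ¬ WheelIn G k S) (hs : 1 ≤ s)
    (hn : 4 * (2 * s ^ 2) * (2 ^ (4 * (2 * s ^ 2) * k) * k + 1) + 8 * (2 * s ^ 2) * (2 * s ^ 2) * k
      ≤ Fintype.card V) (B : Finset V)
    (hmiss : 4 * s ^ 2 * (Bᶜ.card * B.card) ≤
      4 * s ^ 2 * ∑ x ∈ Bᶜ, dg G B x + 2 * Fintype.card V ^ 2) (v : V)
    (h1 : Fintype.card V ≤ s * dg G Bᶜ v) (h2 : Fintype.card V ≤ s * dg G B v) : False := by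
  set n := Fintype.card V with hnV
  set X := nb G Bᶜ v with hX
  set Y := nb G B v with hY
  have hXs : X ⊆ Bᶜ := fun x hx => (mem_nb.1 hx).1
  have hYs : Y ⊆ B := fun x hx => (mem_nb.1 hx).1
  have key : X.card * Y.card + ∑ x ∈ Bᶜ, dg G B x ≤ ∑ x ∈ X, dg G Y x + Bᶜ.card * B.card := by
    have hx : ∀ x, Y.card + dg G B x ≤ dg G Y x + B.card := by
      intro x
      have h3 := dg_disjUnion G (Finset.disjoint_sdiff (s := Y) (t := B)) x
      rw [Finset.union_sdiff_of_subset hYs] at h3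
      have h4 := dg_le_card G (B \ Y) x
      rw [Finset.card_sdiff_of_subset hYs] at h4
      have := Finset.card_le_card hYs
      omega
    have h3 := Finset.sum_le_sum fun x (_ : x ∈ X) => hx x
    rw [Finset.sum_add_distrib, Finset.sum_add_distrib, Finset.sum_const, Finset.sum_const,
      smul_eq_mul, smul_eq_mul] at h3
    have h4 := Finset.sum_le_card_nsmul (Bᶜ \ X) (fun x => dg G B x) B.card
      fun x _ => dg_le_card G B x
    have h5 := Finset.sum_sdiff (f := fun x => dg G B x) hXs
    have h6 := Finset.card_sdiff_add_card_eq_card hXs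
    rw [smul_eq_mul] at h4
    rw [← h5, ← h6, add_mul]
    linarith
  have hXY : n * n ≤ (s * X.card) * (s * Y.card) := Nat.mul_le_mul h1 h2
  have h3 := Nat.mul_le_mul_left (4 * s ^ 2) key
  obtain ⟨X', hX', Y', hY', hXc, hYc, hXY'⟩ := exists_biclique G k (2 * s ^ 2) n hk
    (by nlinarith) X Y (Finset.card_le_univ _) (Finset.card_le_univ _)
    (by omega) (by omega) (by nlinarith)
  exact hW _ (wheelIn_of_biclique G hk v X' Y' hXc hYc hXY'
    (fun x hx => (mem_nb.1 (hX' hx)).2) (fun y hy => (mem_nb.1 (hY' hy)).2))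

/-- Moving the few atypical vertices to the other side leaves only small degrees inside each side. -/
lemma clean_partition (hk : 1 ≤ k) (hW : ∀ S, ¬ WheelIn G k S) (hs : 1 ≤ s)
    (hn : 4 * (4 * s ^ 2) * (2 ^ (4 * (4 * s ^ 2) * k) * k + 1) + 8 * (4 * s ^ 2) * (4 * s ^ 2) * k
      + 4 * s ^ 2 * C ≤ Fintype.card V)
    (hn2 : 4 * (2 * s ^ 2) * (2 ^ (4 * (2 * s ^ 2) * k) * k + 1) +
      8 * (2 * s ^ 2) * (2 * s ^ 2) * k ≤ Fintype.card V)
    (hn3 : s * C + 5 * Fintype.card V ≤ s * Fintype.card V)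
    (hmin : ∀ v, Fintype.card V ≤ 2 * dg G Finset.univ v + C)
    (hmax : ∀ v, 2 * (4 * s ^ 2) * dg G Finset.univ v ≤ (4 * s ^ 2 + 2) * Fintype.card V) :
    ∃ A : Finset V, (∀ x ∈ A, s * dg G A x ≤ 2 * Fintype.card V) ∧
      ∀ x ∈ Aᶜ, s * dg G Aᶜ x ≤ 2 * Fintype.card V := by
  classical
  have hs2 : 1 ≤ 4 * s ^ 2 := by nlinarith
  obtain ⟨B, hB, hA, hmiss⟩ := rough_partition hk hW (4 * s ^ 2) hs2 hn hmin hmax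
  have hnb := not_both_large hk hW hs hn2 B hmiss
  set n := Fintype.card V with hnV
  have hn0 : 0 < n := lt_of_lt_of_le (by positivity) ((Nat.le_add_right _ _).trans hn2)
  -- a sum bound controls the number of vertices of degree at least `n / s`
  have markov : ∀ (T U : Finset V) (c : ℕ), T ⊆ U → (∀ x ∈ T, n ≤ s * dg G U x) →
      4 * s ^ 2 * ∑ x ∈ U, dg G U x ≤ c * n ^ 2 → 4 * (s * T.card) ≤ c * n := by
    intro T U c hTU hT hsum
    have h1 : T.card * n ≤ s * ∑ x ∈ U, dg G U x := by
      rw [← smul_eq_mul, ← Finset.sum_const, Finset.mul_sum]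
      exact (Finset.sum_le_sum hT).trans (Finset.sum_le_sum_of_subset hTU)
    refine Nat.le_of_mul_le_mul_right (c := n) ?_ hn0
    have := Nat.mul_le_mul_left (4 * s) h1
    nlinarith
  set A := Finset.univ.filter (fun v => s * dg G Bᶜ v < n) with hAdef
  have hmA : ∀ v, v ∈ A ↔ s * dg G Bᶜ v < n := fun v => by simp [hAdef]
  -- vertices of `B` moved to the first side
  have hT1 := markov (B ∩ A) B 1 Finset.inter_subset_left (fun x hx => by
    have h1 := (hmA x).1 (Finset.mem_inter.1 hx).2
    by_contra h2
    have h3 := Nat.mul_le_mul_left s (hmin x)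
    rw [← dg_add_compl B x] at h3
    rw [mul_add, mul_left_comm, mul_add] at h3
    omega) (by omega)
  have hT2 := markov (Bᶜ ∩ Aᶜ) Bᶜ 3 Finset.inter_subset_left (fun x hx => by
    have h1 := (Finset.mem_inter.1 hx).2
    rw [Finset.mem_compl, hmA] at h1
    omega) hA
  refine ⟨A, fun x hx => ?_, fun x hx => ?_⟩
  · have h1 := (hmA x).1 hx
    have h2 : dg G A x ≤ dg G Bᶜ x + (B ∩ A).card := by
      refine (dg_mono G (T := Bᶜ ∪ (B ∩ A)) ?_ x).trans ((dg_union_le G _ _ x).trans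
        (Nat.add_le_add_left (dg_le_card _ _ _) _))
      intro u hu
      by_cases hu' : u ∈ B <;> simp [hu, hu']
    have h3 := Nat.mul_le_mul_left s h2
    rw [mul_add] at h3
    omega
  · have h1 := hx
    rw [Finset.mem_compl, hmA] at h1
    -- `x` has many neighbours in the complement of `B`, hence few in `B`
    have h4 : ¬ n ≤ s * dg G B x := fun h => hnb x (by omega) h
    have h2 : dg G Aᶜ x ≤ dg G B x + (Bᶜ ∩ Aᶜ).card := by
      refine (dg_mono G (T := B ∪ (Bᶜ ∩ Aᶜ)) ?_ x).trans ((dg_union_le G _ _ x).trans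
        (Nat.add_le_add_left (dg_le_card _ _ _) _))
      intro u hu
      have := Finset.mem_compl.1 hu
      by_cases hu' : u ∈ B <;> simp [this, hu']
    have h3 := Nat.mul_le_mul_left s h2
    rw [mul_add] at h3
    omega

/-- A partition with small degrees inside both sides is nearly complete bipartite, and then the
exact degree bound inside the sides improves the number of missing edges to a constant. -/
lemma nearBip_of_clean (hk : 1 ≤ k) (hW : ∀ S, ¬ WheelIn G k S)
    (hn : 100 * (k + 1) * (C + 2 * k + 1) ≤ Fintype.card V)
    (hmin : ∀ v, Fintype.card V ≤ 2 * dg G Finset.univ v + C) (A : Finset V)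
    (hA : ∀ x ∈ A, 100 * (k + 1) * dg G A x ≤ 2 * Fintype.card V)
    (hB : ∀ x ∈ Aᶜ, 100 * (k + 1) * dg G Aᶜ x ≤ 2 * Fintype.card V) :
    NearBip G k (C + 2 * k) A Aᶜ := by
  set n := Fintype.card V with hnV
  have hnC : 100 * C + 200 * k + 100 ≤ n := by nlinarith [Nat.zero_le (k * (C + 2 * k + 1))]
  have hab : A.card + Aᶜ.card = n := Finset.card_add_card_compl A
  have hsum := fun x => dg_add_compl (G := G) A x
  have hA50 : ∀ x ∈ A, 50 * dg G A x ≤ n := fun x hx => by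
    have := hA x hx; nlinarith [Nat.zero_le (k * dg G A x)]
  have hB50 : ∀ x ∈ Aᶜ, 50 * dg G Aᶜ x ≤ n := fun x hx => by
    have := hB x hx; nlinarith [Nat.zero_le (k * dg G Aᶜ x)]
  have hcA := fun x => dg_le_card G A x
  have hcB := fun x => dg_le_card G Aᶜ x
  have hAne : A.Nonempty := by
    by_contra h
    rw [Finset.not_nonempty_iff_eq_empty] at h
    obtain ⟨v⟩ : Nonempty V := Fintype.card_pos_iff.1 (by omega)
    have h1 := hB50 v (by simp [h])
    have h2 := hmin v
    have h3 := hsum v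
    have h4 := hcA v
    rw [h, Finset.card_empty] at h4
    rw [h] at h3 h1
    omega
  have hBne : Aᶜ.Nonempty := by
    by_contra h
    rw [Finset.not_nonempty_iff_eq_empty] at h
    obtain ⟨v⟩ : Nonempty V := Fintype.card_pos_iff.1 (by omega)
    have hv : v ∈ A := by
      by_contra hv
      have := Finset.mem_compl.2 hv
      rw [h] at this
      simp at this
    have h1 := hA50 v hv
    have h2 := hmin v
    have h3 := hsum v
    have h4 := hcB v
    rw [h, Finset.card_empty] at h4
    rw [h] at h3
    omega
  obtain ⟨x0, hx0⟩ := hAne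
  obtain ⟨y0, hy0⟩ := hBne
  have P : ∀ D, (∀ x ∈ A, Aᶜ.card ≤ dg G Aᶜ x + D) → (∀ x ∈ Aᶜ, A.card ≤ dg G A x + D) →
      4 * ((k + 1) * D) ≤ n → NearBip G k D A Aᶜ := by
    intro D h1 h2 hD
    have h3 := hmin x0
    have h4 := hmin y0
    have h5 := hsum x0
    have h6 := hsum y0
    have h7 := hA50 x0 hx0
    have h8 := hB50 y0 hy0
    have h9 := hcB x0
    have h10 := hcA y0
    exact ⟨disjoint_compl_right, hW, h1, h2, by omega, by omega⟩
  have P1 : NearBip G k (4 * n / (100 * (k + 1)) + C) A Aᶜ := by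
    have hdiv : ∀ t, 100 * (k + 1) * t ≤ 4 * n → t ≤ 4 * n / (100 * (k + 1)) := fun t ht =>
      (Nat.le_div_iff_mul_le (by positivity)).2 (by linarith)
    have hs0 : 0 ≤ k := Nat.zero_le k
    refine P _ (fun x hx => ?_) (fun x hx => ?_) ?_
    · have h2 := hdiv (dg G A x + dg G Aᶜ y0) (by
        have := hA x hx; have := hB y0 hy0; linarith)
      have := hmin x; have := hsum x; have := hmin y0; have := hsum y0; have := hcA y0
      omega
    · have h2 := hdiv (dg G Aᶜ x + dg G A x0) (by
        have := hB x hx; have := hA x0 hx0; linarith)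
      have := hmin x; have := hsum x; have := hmin x0; have := hsum x0; have := hcB x0
      omega
    · have h1 := Nat.div_mul_le_self (4 * n) (100 * (k + 1))
      nlinarith
  have dA := P1.degA hk
  have dB := P1.symm.degA hk
  refine P _ (fun x hx => ?_) (fun x hx => ?_) ?_
  · have := dA x hx; have := dB y0 hy0
    have := hmin x; have := hsum x; have := hmin y0; have := hsum y0; have := hcA y0
    omega
  · have := dB x hx; have := dA x0 hx0
    have := hmin x; have := hsum x; have := hmin x0; have := hsum x0; have := hcB x0
    omega
  · nlinarith
end

/-- With `p` the size of the larger side, `NearBip.sum_le` bounds the number of edges by a term of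
`oneWheel`. -/
lemma upperBound_zero {k : ℕ} (hk : 3 ≤ k) : UpperBound k 0 := by
  classical
  obtain ⟨C, hC⟩ := minDegree_of_exF (k := k) (by omega) 0
  set s := 100 * (k + 1) with hs
  obtain ⟨n1, hn1⟩ := exists_wheel_of_large_degree k C (4 * s ^ 2) 0 (by omega)
    (by rw [hs]; exact Nat.succ_le_of_lt (by positivity))
  refine reduce_minDegree _ (exF k 0) (n1 +
    (4 * (4 * s ^ 2) * (2 ^ (4 * (4 * s ^ 2) * k) * k + 1) + 8 * (4 * s ^ 2) * (4 * s ^ 2) * k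
      + 4 * s ^ 2 * C) + (4 * (2 * s ^ 2) * (2 ^ (4 * (2 * s ^ 2) * k) * k + 1) +
      8 * (2 * s ^ 2) * (2 * s ^ 2) * k) + 2 * C + 2 + 100 * (k + 1) * (C + 2 * k + 1)
    + 2 * (4 * k * (bigK k (C + 2 * k) + 1))) fun V _ G hn hG hdeg => ?_
  have hW : ∀ S, ¬ WheelIn G k S := fun S hS => hG (contains_one_of_wheelIn hS)
  have hmin : ∀ v, Fintype.card V ≤ 2 * dg G Finset.univ v + C := fun v =>
    hC _ _ (by omega) (hdeg v)
  have hmax : ∀ v, 2 * (4 * s ^ 2) * dg G Finset.univ v ≤ (4 * s ^ 2 + 2) * Fintype.card V := by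
    intro v
    by_contra h
    obtain ⟨T, hT, -⟩ := hn1 V G (by omega) hmin v (by omega) ∅ (by simp) (by simp)
    exact hW T hT
  obtain ⟨A, hA, hB⟩ := clean_partition (by omega) hW (by omega) (by omega) (by omega)
    (by
      have h1 : 2 * C ≤ Fintype.card V := by omega
      have : 10 ≤ s := by omega
      nlinarith) hmin hmax
  have P := nearBip_of_clean (by omega) hW (by omega) hmin A hA hB
  set n := Fintype.card V with hnV
  have hab : A.card + Aᶜ.card = n := Finset.card_add_card_compl A
  have hsum := P.sum_le hk (M := max A.card Aᶜ.card) (le_max_left _ _) (le_max_right _ _)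
    (by rcases le_total A.card Aᶜ.card with h | h
        · rw [max_eq_right h]; omega
        · rw [max_eq_left h]; omega)
  have he := two_mul_edges G
  rw [← Finset.sum_add_sum_compl A] at he
  have hAe : ∑ x ∈ A, dg G Finset.univ x ≤ ∑ x ∈ A, dg G A x + A.card * Aᶜ.card := by
    rw [← smul_eq_mul, ← Finset.sum_const, ← Finset.sum_add_distrib]
    exact Finset.sum_le_sum fun x _ => by
      rw [← dg_add_compl A]; exact Nat.add_le_add_left (dg_le_card _ _ _) _
  have hBe : ∑ x ∈ Aᶜ, dg G Finset.univ x ≤ ∑ x ∈ Aᶜ, dg G Aᶜ x + A.card * Aᶜ.card := by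
    rw [mul_comm, ← smul_eq_mul, ← Finset.sum_const, ← Finset.sum_add_distrib]
    exact Finset.sum_le_sum fun x _ => by
      rw [← dg_add_compl A, add_comm]; exact Nat.add_le_add_left (dg_le_card _ _ _) _
  have hM := le_oneWheel (k := k) (n := n) (p := max A.card Aᶜ.card)
    (by rcases le_total A.card Aᶜ.card with h | h
        · rw [max_eq_right h]; omega
        · rw [max_eq_left h]; omega)
    (max_le (by omega) (by omega))
  have hprod : max A.card Aᶜ.card * (n - max A.card Aᶜ.card) = A.card * Aᶜ.card := by
    rcases le_total A.card Aᶜ.card with h | h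
    · rw [max_eq_right h, mul_comm, show n - Aᶜ.card = A.card by omega]
    · rw [max_eq_left h, show n - A.card = Aᶜ.card by omega]
  rw [hprod] at hM
  refine le_trans ?_ hM
  omega

lemma upperBound {k : ℕ} (hk : 3 ≤ k) (r : ℕ) : UpperBound k r := by
  induction r with
  | zero => exact upperBound_zero hk
  | succ r ih => exact upperBound_succ (by omega) r (upperBound_zero hk) ih

/-! ### Near-regular graphs with small components -/

lemma dg_univ {V : Type} [Fintype V] (G : SimpleGraph V) [DecidableRel G.Adj] (v : V) :
    dg G Finset.univ v = ∑ u, if G.Adj v u then 1 else 0 := by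
  classical
  rw [dg, Finset.card_filter]
  exact Finset.sum_congr rfl fun u _ => by congr

lemma dg_compl {V : Type} [Fintype V] (G : SimpleGraph V) (v : V) :
    dg Gᶜ Finset.univ v + dg G Finset.univ v + 1 = Fintype.card V := by
  classical
  rw [dg_univ, dg_univ, ← Finset.sum_add_distrib, Fintype.card_eq_sum_ones,
    ← Finset.sum_erase_add _ _ (Finset.mem_univ v), ← Finset.sum_erase_add (a := v) _ (fun _ => 1)
      (Finset.mem_univ v)]
  simp only [SimpleGraph.irrefl, if_false, add_zero]
  congr 1
  refine Finset.sum_congr rfl fun u hu => ?_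
  have := Finset.ne_of_mem_erase hu
  by_cases h : G.Adj v u <;> simp [h, SimpleGraph.compl_adj, this.symm]

/-- There is a graph on `p` vertices with maximum degree at most `k - 1` and degree sum at least
`(k - 1) * p - l`, whose vertices are partitioned into blocks of at most `2 * k - 2` vertices with
no edges between different blocks. -/
def Blk (k p l : ℕ) : Prop :=
  ∃ (V ι : Type) (_ : Fintype V) (H : SimpleGraph V) (β : V → ι), Fintype.card V = p ∧
    (∀ u v, H.Adj u v → β u = β v) ∧
    (∀ T : Finset V, (∀ u ∈ T, ∀ v ∈ T, β u = β v) → T.card ≤ 2 * k - 2) ∧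
    (∀ v, dg H Finset.univ v ≤ k - 1) ∧ (k - 1) * p ≤ ∑ v, dg H Finset.univ v + l

lemma Blk.single {k p l : ℕ} (H : SimpleGraph (Fin p)) (hp : p ≤ 2 * k - 2)
    (h1 : ∀ v, dg H Finset.univ v ≤ k - 1) (h2 : (k - 1) * p ≤ ∑ v, dg H Finset.univ v + l) :
    Blk k p l :=
  ⟨Fin p, Unit, inferInstance, H, fun _ => (), by simp, by simp, fun T _ =>
    (Finset.card_le_univ T).trans (by simpa using hp), h1, h2⟩

lemma Blk.zero (k : ℕ) : Blk k 0 0 := Blk.single ⊥ (by omega) (by simp) (by simp)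

lemma Blk.add {k p l p' l' : ℕ} (h : Blk k p l) (h' : Blk k p' l') : Blk k (p + p') (l + l') := by
  classical
  obtain ⟨V, ι, _, H, β, hc, h1, h2, h3, h4⟩ := h
  obtain ⟨V', ι', _, H', β', hc', h1', h2', h3', h4'⟩ := h'
  have dl : ∀ v, dg (H ⊕g H') Finset.univ (Sum.inl v) = dg H Finset.univ v := by
    intro v; rw [dg_univ, dg_univ, Fintype.sum_sum_type]; simp
  have dr : ∀ v, dg (H ⊕g H') Finset.univ (Sum.inr v) = dg H' Finset.univ v := by
    intro v; rw [dg_univ, dg_univ, Fintype.sum_sum_type]; simp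
  refine ⟨V ⊕ V', ι ⊕ ι', inferInstance, H ⊕g H', Sum.map β β', by simp [hc, hc'], ?_, ?_, ?_, ?_⟩
  · rintro (u | u) (v | v) huv <;> simp at huv ⊢
    exacts [h1 _ _ huv, h1' _ _ huv]
  · intro T hT
    rcases T.eq_empty_or_nonempty with rfl | ⟨x, hx⟩
    · simp
    rcases x with x | x
    · have : T ⊆ (T.preimage Sum.inl Sum.inl_injective.injOn).map ⟨Sum.inl, Sum.inl_injective⟩ := by
        rintro (y | y) hy
        · simpa using hy
        · simpa using hT _ hx _ hy
      refine (Finset.card_le_card this).trans ?_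
      rw [Finset.card_map]
      refine h2 _ fun u hu v hv => ?_
      simpa using hT _ (Finset.mem_preimage.1 hu) _ (Finset.mem_preimage.1 hv)
    · have : T ⊆ (T.preimage Sum.inr Sum.inr_injective.injOn).map ⟨Sum.inr, Sum.inr_injective⟩ := by
        rintro (y | y) hy
        · simpa using hT _ hx _ hy
        · simpa using hy
      refine (Finset.card_le_card this).trans ?_
      rw [Finset.card_map]
      refine h2' _ fun u hu v hv => ?_
      simpa using hT _ (Finset.mem_preimage.1 hu) _ (Finset.mem_preimage.1 hv)
  · rintro (v | v)
    · rw [dl]; exact h3 v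
    · rw [dr]; exact h3' v
  · rw [Fintype.sum_sum_type]
    simp only [dl, dr]
    rw [mul_add]
    omega

lemma Blk.nsmul {k p : ℕ} (h : Blk k p 0) (t : ℕ) : Blk k (t * p) 0 := by
  induction t with
  | zero => simpa using Blk.zero k
  | succ t ih => simpa [add_mul] using ih.add h

lemma blk_complete {k : ℕ} (hk : 2 ≤ k) : Blk k k 0 := by
  have : ∀ v : Fin k, dg (⊤ : SimpleGraph (Fin k)) Finset.univ v = k - 1 := by
    intro v
    have h1 := dg_compl (⊥ : SimpleGraph (Fin k)) v
    have h2 : dg (⊥ : SimpleGraph (Fin k)) Finset.univ v = 0 := by simp [dg]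
    rw [compl_bot, Fintype.card_fin] at h1
    omega
  refine Blk.single ⊤ (by omega) (fun v => (this v).le) ?_
  simp only [this]
  simp [mul_comm]

/-- The complement of a cycle on `k + 2` vertices is `(k - 1)`-regular. -/
lemma blk_compl_cycle {k : ℕ} (hk : 4 ≤ k) : Blk k (k + 2) 0 := by
  have : ∀ v : Fin (k + 2), dg (cycleGraph (k + 2))ᶜ Finset.univ v = k - 1 := by
    intro v
    have h1 := dg_compl (cycleGraph (k + 2)) v
    have h2 : dg (cycleGraph (k + 2)) Finset.univ v = 2 := by
      obtain ⟨j, rfl⟩ : ∃ j, k = j + 1 := ⟨k - 1, by omega⟩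
      refine Eq.trans ?_ (cycleGraph_degree_three_le (n := j) (v := v))
      rw [← card_neighborFinset_eq_degree, dg]
      congr 1
      ext u
      simp
    rw [Fintype.card_fin] at h1
    omega
  refine Blk.single _ (by omega) (fun v => (this v).le) ?_
  simp only [this]
  simp [mul_comm]

/-- A minimum edge cover of the vertices `0, …, k`: the pairs `{2i, 2i + 1}`, and the pair
`{k - 1, k}`. -/
def coverGraph (k : ℕ) : SimpleGraph (Fin (k + 1)) where
  Adj u v := u ≠ v ∧ (u.val / 2 = v.val / 2 ∨ u.val + v.val = 2 * k - 1)
  symm := ⟨fun u v h => ⟨h.1.symm, by rcases h.2 with h | h <;> omega⟩⟩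
  loopless := ⟨fun u h => h.1 rfl⟩

/-- Removing a minimum edge cover from the complete graph on `k + 1` vertices leaves degrees `k - 1`,
with one exception of degree `k - 2` when `k` is even. -/
lemma blk_compl_cover {k : ℕ} (hk : 3 ≤ k) : Blk k (k + 1) ((k + 1) % 2) := by
  classical
  have hpos : ∀ v, 1 ≤ dg (coverGraph k) Finset.univ v := by
    intro v
    have hv := v.2
    obtain ⟨u, hu⟩ : ∃ u, (coverGraph k).Adj v u := by
      by_cases h1 : v.val = k
      · exact ⟨⟨k - 1, by omega⟩, by simp [Fin.ext_iff]; omega, Or.inr (by simp; omega)⟩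
      · rcases Nat.mod_two_eq_zero_or_one v.val with h2 | h2
        · exact ⟨⟨v.val + 1, by omega⟩, by simp [Fin.ext_iff], Or.inl (by simp; omega)⟩
        · exact ⟨⟨v.val - 1, by omega⟩, by simp [Fin.ext_iff]; omega, Or.inl (by simp; omega)⟩
    exact Finset.card_pos.2 ⟨u, by simpa using hu⟩
  have hle : ∀ v : Fin (k + 1), dg (coverGraph k) Finset.univ v ≤
      1 + if v = ⟨k - 1, by omega⟩ then (k + 1) % 2 else 0 := by
    intro v
    have hv := v.2
    split_ifs with h
    · by_cases h2 : (k + 1) % 2 = 0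
      · rw [h2]
        refine Finset.card_le_one.2 fun a ha b hb => ?_
        simp only [Finset.mem_filter, Finset.mem_univ, true_and, coverGraph, h, ne_eq,
          Fin.ext_iff] at ha hb
        have := a.2
        have := b.2
        ext
        omega
      · have : (Finset.univ.filter fun u => (coverGraph k).Adj v u) ⊆
            {⟨k, by omega⟩, ⟨k - 2, by omega⟩} := by
          intro a ha
          simp only [Finset.mem_filter, Finset.mem_univ, true_and, coverGraph, h, ne_eq,
            Fin.ext_iff] at ha
          have := a.2
          simp only [Finset.mem_insert, Finset.mem_singleton, Fin.ext_iff]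
          omega
        have h3 := (Finset.card_le_card this).trans Finset.card_le_two
        have h4 : dg (coverGraph k) Finset.univ v ≤ 2 := by
          unfold dg; convert h3
        omega
    · refine Finset.card_le_one.2 fun a ha b hb => ?_
      simp only [Finset.mem_filter, Finset.mem_univ, true_and, coverGraph, ne_eq,
        Fin.ext_iff] at ha hb h
      have := a.2
      have := b.2
      ext
      omega
  have hc := fun v => dg_compl (coverGraph k) v
  simp only [Fintype.card_fin] at hc
  refine Blk.single (coverGraph k)ᶜ (by omega) (fun v => ?_) ?_
  · have := hpos v; have := hc v; omega
  · have : ∀ v ∈ Finset.univ, k - 1 ≤ dg (coverGraph k)ᶜ Finset.univ v +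
        if v = ⟨k - 1, by omega⟩ then (k + 1) % 2 else 0 := by
      intro v _
      have := hle v; have := hc v; omega
    have := Finset.sum_le_sum this
    rw [Finset.sum_add_distrib, Finset.sum_ite_eq' Finset.univ, Finset.sum_const] at this
    simpa [mul_comm] using this

/-- Every large `p` is a sum of sizes `k`, `k + 1`, `k + 2` for which suitable blocks exist; at most one
block misses a degree. -/
lemma exists_blk {k : ℕ} (hk : 3 ≤ k) {p : ℕ} (hp : k * (k + 1) ≤ p) : Blk k p 1 := by
  have hdiv := Nat.div_add_mod p k
  have hr := Nat.mod_lt p (show 0 < k by omega)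
  have ha : k + 1 ≤ p / k := (Nat.le_div_iff_mul_le (by omega)).2 (by rwa [mul_comm])
  generalize p / k = a at *
  generalize p % k = r at *
  have mono : ∀ {q l}, Blk k q l → l ≤ 1 → Blk k q 1 := by
    rintro q l ⟨V, ι, i, H, β, h1, h2, h3, h4, h5⟩ hl
    exact ⟨V, ι, i, H, β, h1, h2, h3, h4, h5.trans (by omega)⟩
  rcases Nat.mod_two_eq_zero_or_one k with h2 | h2
  · -- blocks of `k` and `k + 2` vertices and possibly one of `k + 1` vertices
    obtain ⟨c, hc⟩ : ∃ c, c = r / 2 := ⟨_, rfl⟩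
    have h4 : 4 ≤ k := by omega
    obtain ⟨e, he⟩ : ∃ e, a = c + 1 + e := ⟨a - (c + 1), by omega⟩
    rcases Nat.mod_two_eq_zero_or_one r with hr2 | hr2
    · have := ((blk_compl_cycle h4).nsmul c).add ((blk_complete (k := k) (by omega)).nsmul (e + 1))
      have hpe : c * (k + 2) + (e + 1) * k = p := by
        rw [← hdiv, he, show r = 2 * c by omega]; ring
      rw [hpe] at this
      exact mono this (by omega)
    · have := (((blk_compl_cycle h4).nsmul c).add ((blk_complete (k := k) (by omega)).nsmul e)).add
        (blk_compl_cover hk)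
      have hpe : c * (k + 2) + e * k + (k + 1) = p := by
        rw [← hdiv, he, show r = 2 * c + 1 by omega]; ring
      rw [hpe] at this
      exact mono this (by omega)
  · have hcov := blk_compl_cover hk
    rw [show (k + 1) % 2 = 0 by omega] at hcov
    obtain ⟨e, he⟩ : ∃ e, a = r + e := ⟨a - r, by omega⟩
    have := (hcov.nsmul r).add ((blk_complete (k := k) (by omega)).nsmul e)
    have hpe : r * (k + 1) + e * k = p := by rw [← hdiv, he]; ring
    rw [hpe] at this
    exact mono this (by omega)

/-! ### The extremal construction -/

/-- A wheel as a hub together with a `2k`-periodic closed walk of neighbours of the hub that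
repeats no vertex within a period. -/
lemma wheel_data {V : Type} {G : SimpleGraph V} {k : ℕ} (hk : 3 ≤ k)
    (hG : Contains G (disjointCopies 1 (wheelGraph (2 * k + 1)))) :
    ∃ (h : V) (c : ℕ → V), (∀ i, G.Adj h (c i)) ∧ (∀ i, G.Adj (c i) (c (i + 1))) ∧
      ∀ i j, c i = c j → i % (2 * k) = j % (2 * k) := by
  obtain ⟨f, hf⟩ := hG
  have hlt : ∀ i : ℕ, i % (2 * k) < 2 * k + 1 - 1 := fun i => Nat.mod_lt _ (by omega)
  refine ⟨f (0, Sum.inl ()), fun i => f (0, Sum.inr ⟨i % (2 * k), hlt i⟩), fun i => ?_,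
    fun i => ?_, fun i j hij => ?_⟩
  · refine f.map_adj ((disjointCopies_adj _ _ _).2 ⟨rfl, wheelGraph_adj_inl_inr _ _⟩)
  · refine f.map_adj ((disjointCopies_adj _ _ _).2 ⟨rfl, (wheelGraph_adj_inr_inr _ _).2 ?_⟩)
    change (cycleGraph (2 * k)).Adj ⟨i % (2 * k), hlt i⟩ ⟨(i + 1) % (2 * k), hlt (i + 1)⟩
    rw [cycleGraph_adj']
    right
    rw [Fin.val_sub]
    simp only
    have h1 := Nat.mod_lt i (show 0 < 2 * k by omega)
    rw [Nat.add_mod i 1, Nat.mod_eq_of_lt (show 1 < 2 * k by omega)]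
    generalize i % (2 * k) = a at *
    rcases Nat.lt_or_ge (a + 1) (2 * k) with h2 | h2
    · rw [Nat.mod_eq_of_lt h2, show 2 * k - a + (a + 1) = 2 * k + 1 by omega, Nat.add_mod_left,
        Nat.mod_eq_of_lt (by omega)]
    · rw [show a + 1 = 2 * k by omega, Nat.mod_self, Nat.mod_eq_of_lt (by omega)]
      omega
  · have := hf hij
    simpa using this

/-- The graph on `V ⊕ Fin (t + 2)` obtained from `H` on `V` and a single edge on `Fin (t + 2)`
by adding all edges between the two sides. -/
def lowerGraph {V : Type} (H : SimpleGraph V) (t : ℕ) : SimpleGraph (V ⊕ Fin (t + 2)) where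
  Adj x y := match x, y with
    | Sum.inl a, Sum.inl b => H.Adj a b
    | Sum.inl _, Sum.inr _ => True
    | Sum.inr _, Sum.inl _ => True
    | Sum.inr x, Sum.inr y => (x = 0 ∧ y = 1) ∨ (x = 1 ∧ y = 0)
  symm := ⟨by
    rintro (a | a) (b | b) h
    · exact h.symm
    · trivial
    · trivial
    · exact h.elim (fun h => Or.inr h.symm) (fun h => Or.inl h.symm)⟩
  loopless := ⟨by
    rintro (a | a) h
    · exact h.ne rfl
    · rcases h with ⟨h1, h2⟩ | ⟨h1, h2⟩ <;> · rw [h1] at h2; simp at h2⟩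

/-- A hub in `V` has at most `k - 1` rim neighbours in `V`, so at least two rim edges lie in the
other side; a hub in the other side has at most one rim neighbour there, so a rim path on
`2k - 1` vertices stays in one block of `β`. -/
lemma lowerGraph_wheelFree {V ι : Type} [Fintype V] {H : SimpleGraph V} {β : V → ι} {k : ℕ}
    (hk : 3 ≤ k) (hβ : ∀ u v, H.Adj u v → β u = β v)
    (hT : ∀ T : Finset V, (∀ u ∈ T, ∀ v ∈ T, β u = β v) → T.card ≤ 2 * k - 2)
    (hd : ∀ v, dg H Finset.univ v ≤ k - 1) (t : ℕ) :
    ¬ Contains (lowerGraph H t) (disjointCopies 1 (wheelGraph (2 * k + 1))) := by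
  classical
  intro hG
  obtain ⟨h, c, hh, hc, hinj⟩ := wheel_data hk hG
  have hinj' : ∀ s i j, i < 2 * k → j < 2 * k → c (i + s) = c (j + s) → i = j := by
    intro s i j hi hj hij
    have := Nat.ModEq.add_right_cancel' s (hinj _ _ hij)
    rwa [Nat.ModEq, Nat.mod_eq_of_lt hi, Nat.mod_eq_of_lt hj] at this
  rcases h with v | x
  · have hS : ∀ s, ((Finset.range (2 * k)).filter (fun i => (c (i + s)).isLeft)).card ≤ k - 1 := by
      intro s
      refine le_trans ?_ (hd v)
      rw [← card_nb, ← Finset.card_image_of_injOn (f := fun i => c (i + s)),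
        ← Finset.card_image_of_injective _ (Sum.inl_injective (α := V) (β := Fin (t + 2)))]
      · refine Finset.card_le_card fun y hy => ?_
        obtain ⟨i, hi, rfl⟩ := Finset.mem_image.1 hy
        have h1 := (Finset.mem_filter.1 hi).2
        have h2 := hh (i + s)
        rcases hci : c (i + s) with u | y
        · rw [hci] at h2
          exact Finset.mem_image_of_mem _ (mem_nb.2 ⟨Finset.mem_univ _, h2⟩)
        · simp [hci] at h1
      · intro i hi j hj hij
        simp only [Finset.coe_filter, Finset.mem_range, Set.mem_ofPred_eq] at hi hj
        exact hinj' s i j hi.1 hj.1 hij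
    have h2 : 1 < (Finset.range (2 * k) \
        ((Finset.range (2 * k)).filter (fun i => (c (i + 0)).isLeft) ∪
          (Finset.range (2 * k)).filter (fun i => (c (i + 1)).isLeft))).card := by
      have h3 := Finset.le_card_sdiff
        ((Finset.range (2 * k)).filter (fun i => (c (i + 0)).isLeft) ∪
          (Finset.range (2 * k)).filter (fun i => (c (i + 1)).isLeft)) (Finset.range (2 * k))
      have h4 := Finset.card_union_le
        ((Finset.range (2 * k)).filter (fun i => (c (i + 0)).isLeft))
          ((Finset.range (2 * k)).filter (fun i => (c (i + 1)).isLeft))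
      have := hS 0
      have := hS 1
      rw [Finset.card_range] at h3
      omega
    obtain ⟨i, hi, j, hj, hij⟩ := Finset.one_lt_card.1 h2
    have key : ∀ i ∈ Finset.range (2 * k) \
        ((Finset.range (2 * k)).filter (fun i => (c (i + 0)).isLeft) ∪
          (Finset.range (2 * k)).filter (fun i => (c (i + 1)).isLeft)),
        i < 2 * k ∧ ((c i = Sum.inr 0 ∧ c (i + 1) = Sum.inr 1) ∨
          (c i = Sum.inr 1 ∧ c (i + 1) = Sum.inr 0)) := by
      intro i hi
      simp only [Finset.mem_sdiff, Finset.mem_union, Finset.mem_filter, not_or, not_and,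
        Finset.mem_range] at hi
      obtain ⟨h1, h2, h3⟩ := hi
      have h2 := h2 h1
      have h3 := h3 h1
      have h4 := hc i
      refine ⟨h1, ?_⟩
      rcases hc1 : c i with u | y
      · simp [hc1] at h2
      rcases hc2 : c (i + 1) with u | z
      · simp [hc2] at h3
      rw [hc1, hc2] at h4
      rcases h4 with ⟨e1, e2⟩ | ⟨e1, e2⟩ <;> simp [e1, e2]
    obtain ⟨hi', hi⟩ := key i hi
    obtain ⟨hj', hj⟩ := key j hj
    have hne : c i ≠ c j := fun e => hij (hinj' 0 i j hi' hj' e)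
    have hx : c i = c (j + 1) ∧ c (i + 1) = c j := by
      rcases hi with ⟨a1, a2⟩ | ⟨a1, a2⟩ <;> rcases hj with ⟨b1, b2⟩ | ⟨b1, b2⟩
      · exact absurd (a1.trans b1.symm) hne
      · exact ⟨a1.trans b2.symm, a2.trans b1.symm⟩
      · exact ⟨a1.trans b2.symm, a2.trans b1.symm⟩
      · exact absurd (a1.trans b1.symm) hne
    have e1 := hinj _ _ hx.1
    have e2 := hinj _ _ hx.2
    -- the two rim edges are traversed in opposite directions, so `j + 2 ≡ j` modulo `2k`
    have e3 : (j + 2) ≡ (j + 0) [MOD 2 * k] := by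
      have : i + 1 ≡ j + 1 + 1 [MOD 2 * k] := Nat.ModEq.add_right 1 e1
      exact this.symm.trans e2
    have e4 := Nat.ModEq.add_left_cancel' j e3
    rw [Nat.ModEq, Nat.mod_eq_of_lt (by omega), Nat.zero_mod] at e4
    omega
  · have huniq : ∀ i j y z, c i = Sum.inr y → c j = Sum.inr z → c i = c j := by
      intro i j y z hi hj
      have h1 := hh i
      have h2 := hh j
      rw [hi] at h1
      rw [hj] at h2
      rw [hi, hj]
      rcases h1 with ⟨a1, a2⟩ | ⟨a1, a2⟩ <;> rcases h2 with ⟨b1, b2⟩ | ⟨b1, b2⟩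
      · rw [a2, b2]
      · rw [a1] at b1; simp at b1
      · rw [a1] at b1; simp at b1
      · rw [a2, b2]
    obtain ⟨i0, hi0⟩ : ∃ i0, ∀ j < 2 * k - 1, ∃ a, c (j + (i0 + 1)) = Sum.inl a := by
      by_cases hex : ∃ i0 y, c i0 = Sum.inr y
      · obtain ⟨i0, y, hy⟩ := hex
        refine ⟨i0, fun j hj => ?_⟩
        rcases hcj : c (j + (i0 + 1)) with a | z
        · exact ⟨a, rfl⟩
        · have := hinj _ _ (huniq _ _ _ _ hcj hy)
          have h1 : (j + 1) + i0 ≡ 0 + i0 [MOD 2 * k] := by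
            rw [Nat.ModEq, zero_add, ← this]
            congr 1
            omega
          have := Nat.ModEq.add_right_cancel' i0 h1
          rw [Nat.ModEq, Nat.mod_eq_of_lt (by omega), Nat.zero_mod] at this
          omega
      · push Not at hex
        refine ⟨0, fun j _ => ?_⟩
        rcases hcj : c (j + (0 + 1)) with a | z
        · exact ⟨a, rfl⟩
        · exact absurd hcj (hex _ _)
    obtain ⟨a0, ha0⟩ := hi0 0 (by omega)
    have : ∀ j, ∃ a, j < 2 * k - 1 → c (j + (i0 + 1)) = Sum.inl a := by
      intro j
      by_cases hj : j < 2 * k - 1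
      · obtain ⟨a, ha⟩ := hi0 j hj
        exact ⟨a, fun _ => ha⟩
      · exact ⟨a0, fun h => absurd h hj⟩
    choose a ha using this
    have hb : ∀ j < 2 * k - 1, β (a j) = β (a 0) := by
      intro j
      induction j with
      | zero => exact fun _ => rfl
      | succ j ih =>
        intro hj
        rw [← ih (by omega)]
        have h1 := hc (j + (i0 + 1))
        rw [ha j (by omega), show j + (i0 + 1) + 1 = j + 1 + (i0 + 1) by omega,
          ha (j + 1) hj] at h1
        exact (hβ _ _ h1).symm
    have hcard := hT ((Finset.range (2 * k - 1)).image a) (by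
      intro u hu v hv
      obtain ⟨i, hi, rfl⟩ := Finset.mem_image.1 hu
      obtain ⟨j, hj, rfl⟩ := Finset.mem_image.1 hv
      rw [hb i (Finset.mem_range.1 hi), hb j (Finset.mem_range.1 hj)])
    rw [Finset.card_image_of_injOn, Finset.card_range] at hcard
    · omega
    · intro i hi j hj hij
      have hi := Finset.mem_range.1 hi
      have hj := Finset.mem_range.1 hj
      exact hinj' (i0 + 1) i j (by omega) (by omega) (by rw [ha i hi, ha j hj, hij])

lemma lowerGraph_edges {V : Type} [Fintype V] (H : SimpleGraph V) (t : ℕ) :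
    2 * Nat.card (lowerGraph H t).edgeSet =
      ∑ v, dg H Finset.univ v + 2 * (Fintype.card V * (t + 2)) + 2 := by
  classical
  rw [two_mul_edges, Fintype.sum_sum_type]
  have h1 : ∀ v, dg (lowerGraph H t) Finset.univ (Sum.inl v) = dg H Finset.univ v + (t + 2) := by
    intro v
    rw [dg_univ, dg_univ, Fintype.sum_sum_type]
    congr 1
    simp [lowerGraph]
  have h2 : ∀ x, dg (lowerGraph H t) Finset.univ (Sum.inr x) = Fintype.card V +
      ((if x = 0 then 1 else 0) + (if x = 1 then 1 else 0)) := by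
    intro x
    rw [dg_univ, Fintype.sum_sum_type]
    congr 1
    · simp [lowerGraph]
    · have : ∀ y : Fin (t + 2), (if (lowerGraph H t).Adj (Sum.inr x) (Sum.inr y) then 1 else 0)
          = (if y = 1 then (if x = 0 then 1 else 0) else 0) +
            (if y = 0 then (if x = 1 then 1 else 0) else 0) := by
        intro y
        have h01 : (0 : Fin (t + 2)) ≠ 1 := by simp
        by_cases hx0 : x = 0 <;> by_cases hx1 : x = 1 <;> by_cases hy0 : y = 0 <;>
          by_cases hy1 : y = 1 <;> simp_all [lowerGraph]
      rw [Finset.sum_congr rfl fun y _ => this y, Finset.sum_add_distrib]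
      simp
  simp_rw [h1, h2]
  simp only [Finset.sum_add_distrib]
  simp
  ring

/-- The maximum defining `oneWheel` is attained at some `p` with both `p` and `n - p` large. -/
lemma oneWheel_attained {k : ℕ} (hk : 1 ≤ k) {n : ℕ} (hn : 4 * k + 8 ≤ n) :
    ∃ p, n ≤ 2 * p ∧ p + 2 ≤ n ∧ oneWheel k n ≤ p * (n - p) + (k - 1) * p / 2 + 1 := by
  obtain ⟨p, hp, hpe⟩ := Finset.exists_mem_eq_sup (Finset.Icc 1 n) ⟨1, by simp; omega⟩
    (fun p => p * (n - p) + (k - 1) * p / 2 + 1)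
  rw [Finset.mem_Icc] at hp
  change oneWheel k n = p * (n - p) + (k - 1) * p / 2 + 1 at hpe
  rw [hpe]
  obtain ⟨q, rfl⟩ : ∃ q, n = p + q := ⟨n - p, by omega⟩
  rw [show p + q - p = q by omega]
  obtain ⟨K, rfl⟩ : ∃ K, k = K + 1 := ⟨k - 1, by omega⟩
  simp only [show K + 1 - 1 = K by omega]
  rcases Nat.lt_or_ge (2 * p) (p + q) with h | h
  · rcases Nat.lt_or_ge p 2 with h1 | h1
    · -- here `p = 1` and the complementary part `n - 2` does better
      obtain rfl : p = 1 := by omega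
      refine ⟨q - 1, by omega, by omega, ?_⟩
      obtain ⟨s, rfl⟩ : ∃ s, q = s + 1 := ⟨q - 1, by omega⟩
      rw [show s + 1 - 1 = s by omega, show 1 + (s + 1) - s = 2 by omega]
      have : K * 1 / 2 ≤ K * s / 2 := Nat.div_le_div_right (Nat.mul_le_mul_left _ (by omega))
      omega
    · refine ⟨q, by omega, by omega, ?_⟩
      rw [show p + q - q = p by omega, mul_comm q p]
      have : K * p / 2 ≤ K * q / 2 := Nat.div_le_div_right (Nat.mul_le_mul_left _ (by omega))
      omega
  · rcases Nat.lt_or_ge q 2 with h1 | h1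
    · refine ⟨p + q - 2, by omega, by omega, ?_⟩
      obtain ⟨s, hs⟩ : ∃ s, p + q = s + 2 := ⟨p + q - 2, by omega⟩
      have hps : p = s + 2 - q := by omega
      rw [hs, show s + 2 - 2 = s by omega, show s + 2 - s = 2 by omega]
      have h2 : K * p / 2 ≤ K * s / 2 + K := by
        have : K * p ≤ K * s + K * 2 := by rw [← mul_add]; exact Nat.mul_le_mul_left _ (by omega)
        omega
      have h3 : p * q ≤ s + 2 := by
        interval_cases q <;> omega
      omega
    · refine ⟨p, by omega, by omega, ?_⟩
      rw [show p + q - p = q by omega]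

/-- Large graphs without `r + 1` disjoint wheels and with at least `exF k r` edges exist. -/
def LowerBound (k r : ℕ) : Prop :=
  ∃ n0, ∀ n, n0 ≤ n → ∃ (V : Type) (_ : Fintype V) (G : SimpleGraph V), Fintype.card V = n ∧
    ¬ Contains G (disjointCopies (r + 1) (wheelGraph (2 * k + 1))) ∧
    exF k r n ≤ Nat.card G.edgeSet

lemma lowerBound_zero {k : ℕ} (hk : 3 ≤ k) : LowerBound k 0 := by
  refine ⟨4 * k + 8 + 2 * (k * (k + 1)), fun n hn => ?_⟩
  obtain ⟨p, h1, h2, h3⟩ := oneWheel_attained (k := k) (n := n) (by omega) (by omega)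
  obtain ⟨V, ι, inst, H, β, hV, hβ, hT, hd, hs⟩ := exists_blk hk (p := p) (by omega)
  refine ⟨V ⊕ Fin (n - p - 2 + 2), inferInstance, lowerGraph H (n - p - 2), ?_,
    lowerGraph_wheelFree hk hβ hT hd _, ?_⟩
  · rw [Fintype.card_sum, hV, Fintype.card_fin]; omega
  · have := lowerGraph_edges H (n - p - 2)
    have e : p * (n - p - 2 + 2) = p * (n - p) := by rw [show n - p - 2 + 2 = n - p by omega]
    rw [hV, e] at this
    change oneWheel k n ≤ _
    omega

/-- The cone over `G`: one new vertex joined to everything. -/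
def cone {V : Type} (G : SimpleGraph V) : SimpleGraph (Option V) where
  Adj x y := match x, y with
    | some a, some b => G.Adj a b
    | some _, none => True
    | none, some _ => True
    | none, none => False
  symm := ⟨by
    rintro (_ | a) (_ | b) h
    · exact h
    · trivial
    · trivial
    · exact SimpleGraph.Adj.symm (G := G) h⟩
  loopless := ⟨by
    rintro (_ | a) h
    · exact h
    · exact h.ne rfl⟩

lemma cone_edges {V : Type} [Fintype V] (G : SimpleGraph V) :
    Nat.card (cone G).edgeSet = Nat.card G.edgeSet + Fintype.card V := by
  classical
  have h := two_mul_edges (cone G)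
  have h' := two_mul_edges G
  rw [Fintype.sum_option] at h
  have h1 : dg (cone G) Finset.univ none = Fintype.card V := by
    rw [dg_univ, Fintype.sum_option]
    simp [cone]
  have h2 : ∀ v, dg (cone G) Finset.univ (some v) = dg G Finset.univ v + 1 := by
    intro v
    rw [dg_univ, dg_univ, Fintype.sum_option, add_comm]
    congr 1
    simp [cone]
  simp only [h1, h2, Finset.sum_add_distrib, Finset.sum_const, Finset.card_univ, smul_eq_mul,
    mul_one] at h
  omega

/-- At most one of several disjoint copies uses the apex of a cone. -/
lemma cone_not_contains {V β : Type} {G : SimpleGraph V} {H : SimpleGraph β} {m : ℕ}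
    (hG : ¬ Contains G (disjointCopies m H)) :
    ¬ Contains (cone G) (disjointCopies (m + 1) H) := by
  rintro ⟨f, hf⟩
  obtain ⟨i, hi⟩ : ∃ i : Fin (m + 1), ∀ j x, f (j, x) = none → j = i := by
    by_cases h : ∃ i x, f (i, x) = none
    · obtain ⟨i, x, hx⟩ := h
      exact ⟨i, fun j y hy => congrArg Prod.fst (hf (hy.trans hx.symm))⟩
    · push Not at h
      exact ⟨0, fun j x hx => absurd hx (h j x)⟩
  have hs : ∀ y : Fin m × β, ∃ v, f (i.succAbove y.1, y.2) = some v := by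
    intro y
    rcases hy : f (i.succAbove y.1, y.2) with _ | v
    · exact absurd (hi _ _ hy) (Fin.succAbove_ne _ _)
    · exact ⟨v, rfl⟩
  choose g hg using hs
  refine hG ⟨⟨g, fun {x y} hxy => ?_⟩, fun x y hxy => ?_⟩
  · rw [disjointCopies_adj] at hxy
    have := f.map_adj ((disjointCopies_adj H (i.succAbove x.1, x.2) (i.succAbove y.1, y.2)).2
      ⟨congrArg i.succAbove hxy.1, hxy.2⟩)
    rwa [hg, hg] at this
  · have hxy : g x = g y := hxy
    have := hf ((hg x).trans ((congrArg some hxy).trans (hg y).symm))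
    simp only [Prod.mk.injEq] at this
    exact Prod.ext (Fin.succAbove_right_injective this.1) this.2

lemma lowerBound {k : ℕ} (hk : 3 ≤ k) (r : ℕ) : LowerBound k r := by
  induction r with
  | zero => exact lowerBound_zero hk
  | succ r ih =>
    obtain ⟨n0, h0⟩ := ih
    refine ⟨n0 + 1, fun n hn => ?_⟩
    obtain ⟨V, inst, G, hV, hG, he⟩ := h0 (n - 1) (by omega)
    refine ⟨Option V, inferInstance, cone G, ?_, cone_not_contains hG, ?_⟩
    · rw [Fintype.card_option]; omega
    · rw [cone_edges, hV]
      change (n - 1) + exF k r (n - 1) ≤ _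
      omega

lemma exNum_eq_exF {k : ℕ} (hk : 3 ≤ k) (r : ℕ) : ∃ n0, ∀ n, n0 ≤ n →
    exNum n (disjointCopies (r + 1) (wheelGraph (2 * k + 1))) = exF k r n := by
  obtain ⟨n1, h1⟩ := upperBound hk r
  obtain ⟨n2, h2⟩ := lowerBound hk r
  refine ⟨n1 + n2, fun n hn => ?_⟩
  have hub : exF k r n ∈ upperBounds {e | ∃ G : SimpleGraph (Fin n),
      ¬ Contains G (disjointCopies (r + 1) (wheelGraph (2 * k + 1))) ∧
        Nat.card G.edgeSet = e} := by
    rintro e ⟨G, hG, rfl⟩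
    have := h1 (Fin n) G (by rw [Fintype.card_fin]; omega) hG
    rwa [Fintype.card_fin] at this
  obtain ⟨V, inst, G, hV, hG, he⟩ := h2 n (by omega)
  let φ : V ≃ Fin n := Fintype.equivFinOfCardEq hV
  let ψ : G ≃g G.map φ.toEmbedding := SimpleGraph.Iso.map φ G
  have hmem : Nat.card (G.map φ.toEmbedding).edgeSet ∈ {e | ∃ G : SimpleGraph (Fin n),
      ¬ Contains G (disjointCopies (r + 1) (wheelGraph (2 * k + 1))) ∧
        Nat.card G.edgeSet = e} := by
    refine ⟨_, ?_, rfl⟩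
    rintro ⟨f, hf⟩
    exact hG ⟨ψ.symm.toHom.comp f, ψ.symm.injective.comp hf⟩
  refine le_antisymm (csSup_le ⟨_, hmem⟩ hub) (le_trans ?_ (le_csSup ⟨_, hub⟩ hmem))
  rwa [← Nat.card_congr ψ.mapEdgeSet]

/-- Turán number of `m` disjoint copies of the odd wheel `W_{2k+1}`. -/
theorem turanNumber_disjoint_odd_wheels (k m : ℕ) (hk : 3 ≤ k) (hm : 1 ≤ m) :
    ∃ n₀ : ℕ, ∀ n : ℕ, n > n₀ →
      exNum n (disjointCopies m (wheelGraph (2 * k + 1))) =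
        (Finset.Icc 1 (n - m + 1)).sup (fun p =>
          (m - 1).choose 2 + (k - 1) * p / 2 + (p + m - 1) * (n - m + 1) - p ^ 2 + 1) := by
  obtain ⟨r, rfl⟩ : ∃ r, m = r + 1 := ⟨m - 1, by omega⟩
  obtain ⟨n0, h0⟩ := exNum_eq_exF hk r
  refine ⟨n0 + r + 1, fun n hn => ?_⟩
  rw [h0 n (by omega), ← statement_sup_eq k r n (by omega)]
  simp only [show n - (r + 1) + 1 = n - r by omega, Nat.add_sub_cancel, ← Nat.add_assoc]
end

section
/- Let k ≥ 3 and m ≥ 1 be integers. There exists n₀ such that for all n > n₀, ex(n, mW_{2k+1}) ≥ max over integers n₀' with 1 ≤ n₀' ≤ n−m+1 of [ C(m−1,2) + ⌊(k−1)·n₀'/2⌋ + (n₀'+m−1)(n−m+1) − n₀'² + 1 ]. -/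
/-!
For each `p` in the middle range the bound is attained by an explicit graph. On `p` vertices take
a graph `A` of maximum degree at most `k - 1` with `⌊(k - 1) p / 2⌋` edges whose components have
at most `2k - 2` vertices (`exists_nearRegular`); on the
remaining `q = n - m + 1 - p` vertices take a single edge; form
the join of the two, and join the result with `K_{m-1}`.

* Each of `m` disjoint wheels that avoids `K_{m-1}` lies in the inner join, and by pigeonhole
  one of them does (`contains_of_disjointCopies`).
* The inner join contains no wheel `W_{2k+1}` (`not_contains_wheel`). If the hub is in `A`, at most
  `k - 1` of the `2k` rim vertices are in `A`, so at least two rim edges lie outside `A`, where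
  there is only one edge. If the hub is outside `A`, it has at most one neighbour outside `A`, so
  `2k - 1` consecutive rim vertices form a path in `A`, too long for a component of `A`.

The construction needs `p ≥ 2k` and `q ≥ 2`. For all other `p` and large `n`, the expression
falls short of its value at `p = 2k` by an amount linear in `n`.
-/

open SimpleGraph

/-! ### Near-regular graphs without long paths -/

/-- No path of `G` has `L` vertices; a path is encoded by the values at `0, …, L - 1`
of a function on `ℕ`. -/
def PathFree {V : Type*} (G : SimpleGraph V) (L : ℕ) : Prop :=
  ∀ f : ℕ → V, (∀ j, j + 1 < L → G.Adj (f j) (f (j + 1))) → ¬ Set.InjOn f (Set.Iio L)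

/-- `G` has maximum degree at most `d`, no path on `L` vertices, and at least
`⌊d |V| / 2⌋` edges, the most that the degree bound allows. -/
structure NearRegular {V : Type*} (G : SimpleGraph V) (d L : ℕ) : Prop where
  degree_le : ∀ v, (G.neighborSet v).ncard ≤ d
  pathFree : PathFree G L
  le_edges : d * Nat.card V / 2 ≤ Nat.card G.edgeSet

theorem pathFree_of_card_lt {V : Type*} [Finite V] (G : SimpleGraph V) {L : ℕ}
    (h : Nat.card V < L) : PathFree G L := by
  intro f _ hf
  have h1 : (f '' Set.Iio L).ncard = L := by
    rw [hf.ncard_image, ← Nat.card_coe_set_eq]; simp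
  have h2 := Set.ncard_le_card (f '' Set.Iio L)
  omega

theorem PathFree.sum {V W : Type*} {G : SimpleGraph V} {H : SimpleGraph W} {L : ℕ}
    (hG : PathFree G L) (hH : PathFree H L) : PathFree (G ⊕g H) L := by
  intro f hf hinj
  rcases h0 : f 0 with a | b
  · have hin : ∀ j, j < L → ∃ x, f j = .inl x := by
      intro j
      induction j with
      | zero => exact fun _ => ⟨a, h0⟩
      | succ j ih =>
        intro hj
        obtain ⟨x, hx⟩ := ih (by omega)
        have := hf j hj
        rw [hx] at this
        rcases h1 : f (j + 1) with y | y
        · exact ⟨y, rfl⟩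
        · rw [h1] at this; simp at this
    have hg : ∀ j, ∃ x, j < L → f j = .inl x := fun j => by
      by_cases hj : j < L
      · obtain ⟨x, hx⟩ := hin j hj; exact ⟨x, fun _ => hx⟩
      · exact ⟨a, fun h => absurd h hj⟩
    choose g hg using hg
    refine hG g (fun j hj => ?_) (fun i hi j hj hij => ?_)
    · have := hf j hj
      rwa [hg j (by omega), hg (j + 1) hj, sum_adj_inl] at this
    · exact hinj hi hj (by rw [hg i hi, hg j hj, hij])
  · have hin : ∀ j, j < L → ∃ x, f j = .inr x := by
      intro j
      induction j with
      | zero => exact fun _ => ⟨b, h0⟩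
      | succ j ih =>
        intro hj
        obtain ⟨x, hx⟩ := ih (by omega)
        have := hf j hj
        rw [hx] at this
        rcases h1 : f (j + 1) with y | y
        · rw [h1] at this; simp at this
        · exact ⟨y, rfl⟩
    have hg : ∀ j, ∃ x, j < L → f j = .inr x := fun j => by
      by_cases hj : j < L
      · obtain ⟨x, hx⟩ := hin j hj; exact ⟨x, fun _ => hx⟩
      · exact ⟨b, fun h => absurd h hj⟩
    choose g hg using hg
    refine hH g (fun j hj => ?_) (fun i hi j hj hij => ?_)
    · have := hf j hj
      rwa [hg j (by omega), hg (j + 1) hj, sum_adj_inr] at this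
    · exact hinj hi hj (by rw [hg i hi, hg j hj, hij])

theorem NearRegular.sum {V W : Type*} [Finite V] [Finite W] {G : SimpleGraph V}
    {H : SimpleGraph W} {d L : ℕ} (hG : NearRegular G d L)
    (hH : NearRegular H d L) (he : Even (d * Nat.card V)) : NearRegular (G ⊕g H) d L where
  degree_le := by
    rintro (v | w)
    · rw [neighborSet_sum_inl, Set.ncard_image_of_injective _ Sum.inl_injective]
      exact hG.degree_le v
    · rw [neighborSet_sum_inr, Set.ncard_image_of_injective _ Sum.inr_injective]
      exact hH.degree_le w
  pathFree := hG.pathFree.sum hH.pathFree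
  le_edges := by
    have h1 := hG.le_edges
    have h2 := hH.le_edges
    rw [Nat.card_congr edgeSetSumEquiv, Nat.card_sum, Nat.card_sum, mul_add]
    obtain ⟨r, hr⟩ := he
    omega

/-! ### Circulant blocks -/

/-- On the vertices `0, …, s - 1` arranged in a circle, join vertices at distance at most `j`;
when `e = 1`, add the matching `i ~ i + s / 2` for `i < s / 2`. -/
def circ (s j e : ℕ) : SimpleGraph (Fin s) :=
  SimpleGraph.fromRel fun x y =>
    (∃ t, 1 ≤ t ∧ t ≤ j ∧ (y.val = x.val + t ∨ y.val + s = x.val + t)) ∨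
      (e = 1 ∧ x.val < s / 2 ∧ y.val = x.val + s / 2)

theorem circ_degree_le (s j e : ℕ) (he : e ≤ 1) (hs : 2 * j + e < s) (v : Fin s) :
    ((circ s j e).neighborSet v).ncard ≤ 2 * j + e := by
  have hv := v.isLt
  -- `g` lists the forward neighbours, then the backward ones, then the matching partner.
  let g : ℕ → ℕ := fun i =>
    if i < j then (if v.val + (i + 1) < s then v.val + (i + 1) else v.val + (i + 1) - s)
    else if i < 2 * j then
      (if i - j + 1 ≤ v.val then v.val - (i - j + 1) else v.val + s - (i - j + 1))
    else if v.val < s / 2 then v.val + s / 2 else v.val - s / 2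
  have hsub : Fin.val '' ((circ s j e).neighborSet v) ⊆
      ((Finset.range (2 * j + e)).image g : Finset ℕ) := by
    rintro _ ⟨y, hy, rfl⟩
    have hys := y.isLt
    simp only [circ, mem_neighborSet, fromRel_adj] at hy
    simp only [Finset.coe_image, Set.mem_image, Finset.coe_range, Set.mem_Iio]
    obtain ⟨-, (⟨t, h1, h2, h3⟩ | ⟨h1, h2, h3⟩) | (⟨t, h1, h2, h3⟩ | ⟨h1, h2, h3⟩)⟩ := hy
    · refine ⟨t - 1, by omega, ?_⟩
      simp only [g]; split_ifs <;> omega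
    · refine ⟨2 * j, by omega, ?_⟩
      simp only [g]; split_ifs <;> omega
    · refine ⟨j + (t - 1), by omega, ?_⟩
      simp only [g]; split_ifs <;> omega
    · refine ⟨2 * j, by omega, ?_⟩
      simp only [g]; split_ifs <;> omega
  rw [← Set.ncard_image_of_injective _ Fin.val_injective]
  refine (Set.ncard_le_ncard hsub (Finset.finite_toSet _)).trans ?_
  rw [Set.ncard_coe_finset]
  exact Finset.card_image_le.trans (by simp)

theorem circ_edges (s j e : ℕ) (he : e ≤ 1) (hs : 2 * j + e < s) :
    (2 * j + e) * s / 2 ≤ Nat.card (circ s j e).edgeSet := by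
  let nx : ℕ → ℕ → ℕ := fun a t => if a + t < s then a + t else a + t - s
  -- An edge is indexed by its starting point together with its length.
  let F : (Fin s × Fin j) ⊕ (Fin e × Fin (s / 2)) → (circ s j e).edgeSet := fun z =>
    match z with
    | .inl (x, t) => ⟨s(x, ⟨nx x (t + 1), by simp only [nx]; split_ifs <;> omega⟩), by
        have := x.isLt; have := t.isLt
        rw [mem_edgeSet, circ, fromRel_adj]
        refine ⟨fun h => ?_, .inl (.inl ⟨t + 1, by omega, by omega, ?_⟩)⟩
        · have := congrArg Fin.val h
          simp only [nx] at this; split_ifs at this <;> omega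
        · simp only [nx]; split_ifs <;> omega⟩
    | .inr (u, x) => ⟨s(⟨x, by omega⟩, ⟨x + s / 2, by omega⟩), by
        have := x.isLt; have := u.isLt
        rw [mem_edgeSet, circ, fromRel_adj]
        refine ⟨fun h => ?_, .inl (.inr ⟨by omega, by simp, by simp⟩)⟩
        have := congrArg Fin.val h
        simp only at this; omega⟩
  have hF : Function.Injective F := by
    rintro (⟨x, t⟩ | ⟨u, x⟩) (⟨y, t'⟩ | ⟨u', y⟩) h
    all_goals
      have h' := congrArg Subtype.val h
      simp only [F, Sym2.eq_iff, Fin.ext_iff, nx] at h'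
      have := x.isLt
      have := y.isLt
    · have := t.isLt
      have := t'.isLt
      have : x.val = y.val ∧ t.val = t'.val := by split_ifs at h' <;> omega
      simp [Fin.ext_iff, this]
    · exfalso
      have := t.isLt
      have := u'.isLt
      split_ifs at h' <;> omega
    · exfalso
      have := t'.isLt
      have := u.isLt
      split_ifs at h' <;> omega
    · have := u.isLt
      have := u'.isLt
      have : u.val = u'.val ∧ x.val = y.val := by omega
      simp [Fin.ext_iff, this]
  have hc := Nat.card_le_card_of_injective F hF
  simp only [Nat.card_eq_fintype_card (α := _ ⊕ _), Fintype.card_sum, Fintype.card_prod,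
    Fintype.card_fin] at hc
  refine le_trans (le_of_eq ?_) hc
  rw [show (2 * j + e) * s = e * s + 2 * (s * j) by ring, Nat.add_mul_div_left _ _ (by omega)]
  interval_cases e <;> omega

/-- A single block of size between `d + 1` and `L - 1`. -/
theorem exists_block (d L s : ℕ) (h1 : d < s) (h2 : s < L) :
    ∃ G : SimpleGraph (Fin s), NearRegular G d L := by
  have hd : 2 * (d / 2) + d % 2 = d := Nat.div_add_mod d 2
  refine ⟨circ s (d / 2) (d % 2), ?_, pathFree_of_card_lt _ (by simpa using h2), ?_⟩
  · intro v
    have := circ_degree_le s (d / 2) (d % 2) (by omega) (by omega) v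
    rwa [hd] at this
  · have := circ_edges s (d / 2) (d % 2) (by omega) (by omega)
    rw [hd] at this
    rwa [Nat.card_fin]

/-- Every `p ≥ k` except `2k - 1` is a sum of block sizes in `[k, 2k - 2]`, and all blocks but one
can be taken of size `k` or `2k - 2`, for which `k - 1` times the size is even, so that nothing is
lost to rounding. -/
theorem exists_nearRegular (k : ℕ) (hk : 3 ≤ k) (p : ℕ) (hp : k ≤ p) (hp' : p ≠ 2 * k - 1) :
    ∃ (A : Type) (_ : Finite A) (G : SimpleGraph A),
      Nat.card A = p ∧ NearRegular G (k - 1) (2 * k - 1) := by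
  induction p using Nat.strong_induction_on with
  | _ p ih =>
    rcases lt_or_ge p (2 * k - 1) with h | h
    · obtain ⟨G, hG⟩ := exists_block (k - 1) (2 * k - 1) p (by omega) h
      exact ⟨Fin p, inferInstance, G, by simp, hG⟩
    by_cases h3 : p = 3 * k - 1
    · obtain ⟨G, hG⟩ := exists_block (k - 1) (2 * k - 1) (2 * k - 2) (by omega) (by omega)
      obtain ⟨H, hH⟩ := exists_block (k - 1) (2 * k - 1) (k + 1) (by omega) (by omega)
      refine ⟨Fin (2 * k - 2) ⊕ Fin (k + 1), inferInstance, G ⊕g H, ?_, hG.sum hH ?_⟩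
      · rw [Nat.card_sum, Nat.card_fin, Nat.card_fin]; omega
      · rw [Nat.card_fin, show 2 * k - 2 = 2 * (k - 1) by omega]
        exact (even_two_mul _).mul_left _
    · obtain ⟨G, hG⟩ := exists_block (k - 1) (2 * k - 1) k (by omega) (by omega)
      obtain ⟨B, hB, H, hc, hH⟩ := ih (p - k) (by omega) (by omega) (by omega)
      refine ⟨Fin k ⊕ B, inferInstance, G ⊕g H, ?_, hG.sum hH ?_⟩
      · rw [Nat.card_sum, Nat.card_fin, hc]; omega
      · rw [Nat.card_fin, mul_comm]
        exact Nat.even_mul_pred_self k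

/-! ### Joins -/

@[simp]
theorem graphJoin_inl_inl {V W : Type*} (G : SimpleGraph V) (H : SimpleGraph W) (a b : V) :
    (graphJoin G H).Adj (.inl a) (.inl b) ↔ G.Adj a b := by
  simp only [graphJoin, fromRel_adj, ne_eq, Sum.inl.injEq]
  exact ⟨fun ⟨_, h⟩ => h.elim id fun h => h.symm, fun h => ⟨h.ne, .inl h⟩⟩

@[simp]
theorem graphJoin_inr_inr {V W : Type*} (G : SimpleGraph V) (H : SimpleGraph W) (a b : W) :
    (graphJoin G H).Adj (.inr a) (.inr b) ↔ H.Adj a b := by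
  simp only [graphJoin, fromRel_adj, ne_eq, Sum.inr.injEq]
  exact ⟨fun ⟨_, h⟩ => h.elim id fun h => h.symm, fun h => ⟨h.ne, .inl h⟩⟩

@[simp]
theorem graphJoin_inl_inr {V W : Type*} (G : SimpleGraph V) (H : SimpleGraph W) (a : V) (b : W) :
    (graphJoin G H).Adj (.inl a) (.inr b) := by
  simp [graphJoin]

theorem graphJoin_edges {V W : Type*} [Finite V] [Finite W] (G : SimpleGraph V)
    (H : SimpleGraph W) : Nat.card G.edgeSet + Nat.card H.edgeSet + Nat.card V * Nat.card W ≤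
      Nat.card (graphJoin G H).edgeSet := by
  have hle : G ⊕g H ≤ graphJoin G H := by
    rintro (a | a) (b | b) h
    · simpa using h
    · simp
    · exact (graphJoin_inl_inr G H b a).symm
    · simpa using h
  let F : (G ⊕g H).edgeSet ⊕ (V × W) → (graphJoin G H).edgeSet := fun z =>
    match z with
    | .inl e => ⟨e.1, edgeSet_mono hle e.2⟩
    | .inr (a, b) => ⟨s(.inl a, .inr b), by simp⟩
  have hF : Function.Injective F := by
    rintro (⟨e, he⟩ | ⟨a, b⟩) (⟨e', he'⟩ | ⟨a', b'⟩) h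
    all_goals
      have h' := congrArg Subtype.val h
      simp only [F] at h'
    · simp [h']
    · subst h'; simp at he
    · subst h'; simp at he'
    · simpa [Sym2.eq_iff] using h'
  have := Nat.card_le_card_of_injective F hF
  rwa [Nat.card_sum, Nat.card_congr edgeSetSumEquiv, Nat.card_sum, Nat.card_prod] at this

/-! ### Wheels in joins -/

/-- The hub and the rim of a wheel contained in `G`, with the rim indexed by `ZMod q`. -/
theorem exists_rim {V : Type*} {G : SimpleGraph V} {q : ℕ} (hq : 2 ≤ q)
    (h : Contains G (wheelGraph (q + 1))) :
    ∃ (u : V) (c : ZMod q → V), Function.Injective c ∧ (∀ i, G.Adj (c i) (c (i + 1))) ∧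
      ∀ i, G.Adj u (c i) := by
  obtain ⟨f, hf⟩ := h
  obtain ⟨q, rfl⟩ := Nat.exists_eq_add_of_le' hq
  refine ⟨f (.inl ()), fun i => f (.inr i), fun i j hij => ?_, fun i => ?_, fun i => ?_⟩
  · exact Sum.inr_injective (hf hij)
  · refine f.map_adj ((graphJoin_inr_inr _ _ _ _).2 ?_)
    refine cycleGraph_adj.2 (.inr ?_)
    exact add_sub_cancel_left (G := ZMod (q + 2)) i 1
  · exact f.map_adj (graphJoin_inl_inr _ _ _ _)

/-- If `m` disjoint copies of `H` lie in the join of a graph on fewer than `m` vertices with `G`,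
then one of the copies lies in `G`. -/
theorem contains_of_disjointCopies {K V U : Type*} [Finite K] {m : ℕ} (hK : Nat.card K < m)
    {G₀ : SimpleGraph K} {G : SimpleGraph V} {H : SimpleGraph U}
    (h : Contains (graphJoin G₀ G) (disjointCopies m H)) : Contains G H := by
  obtain ⟨f, hf⟩ := h
  have hex : ∃ i, ∀ v, ∃ x, f (i, v) = .inr x := by
    by_contra! hcon
    have : ∀ i, ∃ v a, f (i, v) = .inl a := fun i => by
      obtain ⟨v, hv⟩ := hcon i
      rcases h : f (i, v) with a | x
      · exact ⟨v, a, h⟩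
      · exact absurd h (hv x)
    choose v a ha using this
    have hinj : Function.Injective a := fun i j hij => by
      have := hf ((ha i).trans ((congrArg Sum.inl hij).trans (ha j).symm))
      exact congrArg Prod.fst this
    have := Nat.card_le_card_of_injective a hinj
    rw [Nat.card_fin] at this
    omega
  obtain ⟨i, hi⟩ := hex
  choose g hg using hi
  refine ⟨⟨g, fun {x y} hxy => ?_⟩, fun x y hxy => ?_⟩
  · have : (disjointCopies m H).Adj (i, x) (i, y) := by
      simp [disjointCopies, hxy, hxy.ne]
    have := f.map_adj this
    rwa [hg, hg, graphJoin_inr_inr] at this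
  · have : f (i, x) = f (i, y) := by
      rw [hg, hg]; exact congrArg Sum.inr hxy
    exact congrArg Prod.snd (hf this)

/-- The join of a graph of maximum degree less than `k` without paths on `2k - 1` vertices with a
graph having at most one edge contains no wheel with a rim of length `2k`. A hub on the first side
would force two rim edges on the second side; a hub on the second side would force `2k - 1`
consecutive rim vertices on the first side. -/
theorem not_contains_wheel {A B : Type*} [Finite A] {G : SimpleGraph A} {k : ℕ} (hk : 3 ≤ k)
    (hdeg : ∀ v, (G.neighborSet v).ncard ≤ k - 1) (hpath : PathFree G (2 * k - 1)) (b₀ b₁ : B) :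
    ¬ Contains (graphJoin G (edge b₀ b₁)) (wheelGraph (2 * k + 1)) := by
  intro h
  obtain ⟨u, c, hc, hcyc, hu⟩ := exists_rim (by omega) h
  have : NeZero (2 * k) := ⟨by omega⟩
  have hval : ∀ t : ℕ, 0 < t → t < 2 * k → (t : ZMod (2 * k)) ≠ 0 := fun t h0 h1 h => by
    rw [ZMod.natCast_eq_zero_iff] at h
    exact absurd (Nat.le_of_dvd h0 h) (by omega)
  rcases u with a | b
  · classical
    let S : Finset (ZMod (2 * k)) := Finset.univ.filter fun i => ∃ x, c i = .inl x
    have hS : S.card ≤ k - 1 := by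
      have hsub : c '' (S : Set (ZMod (2 * k))) ⊆ Sum.inl '' G.neighborSet a := by
        rintro _ ⟨i, hi, rfl⟩
        obtain ⟨x, hx⟩ : ∃ x, c i = .inl x := by simpa [S] using hi
        refine ⟨x, ?_, hx.symm⟩
        have := hu i
        rwa [hx, graphJoin_inl_inl] at this
      have := Set.ncard_le_ncard hsub (Set.toFinite _)
      rw [Set.ncard_image_of_injective _ hc, Set.ncard_image_of_injective _ Sum.inl_injective,
        Set.ncard_coe_finset] at this
      exact this.trans (hdeg a)
    -- The rim edges `i ~ i + 1` with an end in `A` have `i ∈ S` or `i ∈ S - 1`.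
    let T := S ∪ S.image (fun i => i - 1)
    have hT : T.card ≤ 2 * (k - 1) := by
      refine (Finset.card_union_le _ _).trans ?_
      have := Finset.card_image_le (s := S) (f := fun i => i - 1)
      omega
    have hTc : 1 < Tᶜ.card := by
      rw [Finset.card_compl, ZMod.card]; omega
    have hB : ∀ i ∈ Tᶜ, s(c i, c (i + 1)) = s(.inr b₀, .inr b₁) := by
      intro i hi
      have h1 : i ∉ S := fun h => by simp [T, h] at hi
      have h2 : i + 1 ∉ S := fun h => by
        refine (Finset.mem_compl.1 hi) (Finset.mem_union_right _ ?_)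
        exact Finset.mem_image.2 ⟨_, h, by ring⟩
      have h3 := hcyc i
      rcases e1 : c i with x | x
      · exact absurd (by simp [S, e1]) h1
      rcases e2 : c (i + 1) with y | y
      · exact absurd (by simp [S, e2]) h2
      rw [e1, e2, graphJoin_inr_inr, adj_edge, Sym2.eq_iff] at h3
      rw [Sym2.eq_iff]
      rcases h3 with ⟨⟨rfl, rfl⟩ | ⟨rfl, rfl⟩, -⟩ <;> simp
    obtain ⟨i, hi, j, hj, hij⟩ := Finset.one_lt_card.1 hTc
    have := (hB i hi).trans (hB j hj).symm
    rw [Sym2.eq_iff] at this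
    rcases this with ⟨h1, -⟩ | ⟨h1, h2⟩
    · exact hij (hc h1)
    · have h1 := hc h1
      have h2 := hc h2
      apply hval 2 (by omega) (by omega)
      push_cast
      linear_combination h2 - h1
  · have hone : ∃ i₀, ∀ i, i ≠ i₀ → ∃ x, c i = .inl x := by
      by_cases hex : ∃ i₀ y, c i₀ = .inr y
      · obtain ⟨i₀, y, hy⟩ := hex
        refine ⟨i₀, fun i hi => ?_⟩
        rcases e : c i with x | x
        · exact ⟨x, rfl⟩
        · exfalso
          have h1 := hu i₀
          have h2 := hu i
          rw [hy, graphJoin_inr_inr, edge_adj] at h1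
          rw [e, graphJoin_inr_inr, edge_adj] at h2
          have : x = y := by grind
          exact hi (hc (by rw [e, hy, this]))
      · refine ⟨0, fun i _ => ?_⟩
        rcases e : c i with x | x
        · exact ⟨x, rfl⟩
        · exact absurd ⟨i, x, e⟩ hex
    obtain ⟨i₀, h₀⟩ := hone
    have hne : ∀ j : ℕ, j < 2 * k - 1 → i₀ + ((j + 1 : ℕ) : ZMod (2 * k)) ≠ i₀ := fun j hj h =>
      hval (j + 1) (by omega) (by omega) (by simpa using h)
    obtain ⟨a, -⟩ := h₀ _ (hne 0 (by omega))
    have hg : ∀ j : ℕ, ∃ x, j < 2 * k - 1 → c (i₀ + ((j + 1 : ℕ) : ZMod (2 * k))) = .inl x :=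
      fun j => by
        by_cases hj : j < 2 * k - 1
        · obtain ⟨x, hx⟩ := h₀ _ (hne j hj)
          exact ⟨x, fun _ => hx⟩
        · exact ⟨a, fun h => absurd h hj⟩
    choose g hg using hg
    refine hpath g (fun j hj => ?_) (fun i hi j hj hij => ?_)
    · have := hcyc (i₀ + ((j + 1 : ℕ) : ZMod (2 * k)))
      rw [add_assoc, ← Nat.cast_add_one, hg j (by omega), hg (j + 1) hj,
        graphJoin_inl_inl] at this
      exact this
    · simp only [Set.mem_Iio] at hi hj
      have := hc ((hg i hi).trans ((congrArg Sum.inl hij).trans (hg j hj).symm))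
      have := add_left_cancel this
      rw [ZMod.natCast_eq_natCast_iff', Nat.mod_eq_of_lt (by omega),
        Nat.mod_eq_of_lt (by omega)] at this
      omega

/-! ### The lower bound -/

/-- A graph avoiding `H` on any vertex type of size `n` bounds `exNum n H` from below. -/
theorem le_exNum {V U : Type*} [Finite V] (G : SimpleGraph V) (H : SimpleGraph U)
    (h : ¬ Contains G H) : Nat.card G.edgeSet ≤ exNum (Nat.card V) H := by
  let φ := Iso.comap (Finite.equivFin V).symm G
  refine le_csSup ⟨Nat.card (Sym2 (Fin (Nat.card V))), ?_⟩
    ⟨G.comap (Finite.equivFin V).symm, ?_, Nat.card_congr φ.mapEdgeSet⟩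
  · rintro _ ⟨G', -, rfl⟩
    exact Nat.card_le_card_of_injective _ Subtype.val_injective
  · rintro ⟨f, hf⟩
    exact h ⟨φ.toHom.comp f, φ.injective.comp hf⟩

/-- The bound for those `p` for which the extremal construction exists: on `p + q` vertices join
the near-regular graph on `p` vertices with a single edge on `q` vertices, then join the result
with `K_{m-1}`. -/
theorem le_exNum_construction (k m p q : ℕ) (hk : 3 ≤ k) (hm : 1 ≤ m) (hp : 2 * k ≤ p)
    (hq : 2 ≤ q) :
    (m - 1).choose 2 + ((k - 1) * p / 2 + 1 + p * q) + (m - 1) * (p + q) ≤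
      exNum (m - 1 + (p + q)) (disjointCopies m (wheelGraph (2 * k + 1))) := by
  obtain ⟨A, _, GA, hA, hGA⟩ := exists_nearRegular k hk p (by omega) (by omega)
  let b₀ : Fin q := ⟨0, by omega⟩
  let b₁ : Fin q := ⟨1, by omega⟩
  have hne : b₀ ≠ b₁ := by simp [b₀, b₁]
  let G₁ := graphJoin GA (edge b₀ b₁)
  let G := graphJoin (⊤ : SimpleGraph (Fin (m - 1))) G₁
  have hfree : ¬ Contains G (disjointCopies m (wheelGraph (2 * k + 1))) := fun h =>
    not_contains_wheel hk hGA.degree_le hGA.pathFree b₀ b₁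
      (contains_of_disjointCopies (by rw [Nat.card_fin]; omega) h)
  have h1 := le_exNum G _ hfree
  have hcard : Nat.card (A ⊕ Fin q) = p + q := by rw [Nat.card_sum, hA, Nat.card_fin]
  rw [Nat.card_sum, hcard, Nat.card_fin] at h1
  have h2 : _ ≤ Nat.card G.edgeSet := graphJoin_edges _ _
  have h3 : _ ≤ Nat.card G₁.edgeSet := graphJoin_edges _ _
  have h4 := hGA.le_edges
  have h5 : Nat.card (edge b₀ b₁).edgeSet = 1 := by
    rw [Nat.card_coe_set_eq, Set.ncard_eq_one]
    exact ⟨s(b₀, b₁), by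
      rw [edgeSet_edge, sdiff_eq_left, Set.disjoint_singleton_left]
      simpa [Sym2.mem_diagSet] using hne⟩
  have h6 : Nat.card (⊤ : SimpleGraph (Fin (m - 1))).edgeSet = (m - 1).choose 2 := by
    rw [Nat.card_eq_fintype_card, ← edgeFinset_card, card_edgeFinset_top_eq_card_choose_two,
      Fintype.card_fin]
  rw [h5, hA, Nat.card_fin] at h3
  rw [h6, hcard, Nat.card_fin] at h2
  rw [hA] at h4
  omega

/-- lower bound for the Turán number of `m` disjoint odd wheels. -/
theorem turanNumber_disjoint_odd_wheels_lower (k m : ℕ) (hk : 3 ≤ k) (hm : 1 ≤ m) :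
    ∃ n₀ : ℕ, ∀ n : ℕ, n > n₀ →
      (Finset.Icc 1 (n - m + 1)).sup (fun p =>
          (m - 1).choose 2 + (k - 1) * p / 2 + (p + m - 1) * (n - m + 1) - p ^ 2 + 1) ≤
        exNum n (disjointCopies m (wheelGraph (2 * k + 1))) := by
  refine ⟨m + 4 * k ^ 2, fun n hn => Finset.sup_le fun p hp => ?_⟩
  obtain ⟨hp1, hp2⟩ := Finset.mem_Icc.1 hp
  obtain ⟨N, hN⟩ : ∃ N, N = n - m + 1 := ⟨_, rfl⟩
  obtain ⟨r, rfl⟩ : ∃ r, m = r + 1 := ⟨m - 1, by omega⟩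
  obtain ⟨d, rfl⟩ : ∃ d, k = d + 1 := ⟨k - 1, by omega⟩
  have hN4 : 4 * (d + 1) ^ 2 ≤ N := by omega
  have hn' : n = r + N := by omega
  rw [← hN] at hp2 ⊢
  have key : ∀ p q, 2 * (d + 1) ≤ p → 2 ≤ q → p + q = N →
      r.choose 2 + (d * p / 2 + 1 + p * q) + r * N ≤
        exNum n (disjointCopies (r + 1) (wheelGraph (2 * (d + 1) + 1))) := by
    intro p q h1 h2 h3
    have := le_exNum_construction (d + 1) (r + 1) p q hk hm h1 h2
    simp only [Nat.add_sub_cancel] at this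
    rwa [h3, ← hn'] at this
  obtain ⟨q, rfl⟩ : ∃ q, N = p + q := ⟨N - p, by omega⟩
  have hval : (r + 1 - 1).choose 2 + (d + 1 - 1) * p / 2 + (p + (r + 1) - 1) * (p + q) - p ^ 2 + 1
      = r.choose 2 + (d * p / 2 + 1 + p * q) + r * (p + q) := by
    simp only [Nat.add_sub_cancel, ← add_assoc]
    rw [show (p + r) * (p + q) = p * q + r * (p + q) + p ^ 2 by ring]
    simp only [← add_assoc, Nat.add_sub_cancel]
    ring
  rw [hval]
  by_cases hmid : 2 * (d + 1) ≤ p ∧ 2 ≤ q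
  · exact key p q hmid.1 hmid.2 rfl
  -- In the remaining range of `p` the value is at most the one attained at `p = 2k`.
  have hsq : d + 1 ≤ (d + 1) ^ 2 := Nat.le_self_pow (by omega) _
  obtain ⟨q', hq'⟩ : ∃ q', p + q = 2 * (d + 1) + q' := ⟨p + q - 2 * (d + 1), by omega⟩
  refine le_trans ?_ (key (2 * (d + 1)) q' le_rfl (by omega) hq'.symm)
  have h2 : d * (2 * (d + 1)) / 2 = d * (d + 1) := by
    rw [show d * (2 * (d + 1)) = 2 * (d * (d + 1)) by ring]; omega
  rw [h2]
  suffices d * p / 2 + p * q ≤ d * (d + 1) + 2 * (d + 1) * q' by omega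
  rcases not_and_or.1 hmid with h | h
  · have h3 : d * p / 2 ≤ d * (d + 1) := by
      rw [← h2]; exact Nat.div_le_div_right (Nat.mul_le_mul_left _ (by omega))
    have : p * q ≤ 2 * (d + 1) * q' := by
      have : p ≤ 2 * d + 1 := by omega
      nlinarith
    omega
  · have h3 : 2 * (d * p / 2) ≤ d * p := Nat.mul_div_le _ _
    have h4 : q ≤ 1 := by omega
    interval_cases q <;> nlinarith
end

section
/- Let c ≥ 1 be a natural number and let φ : ℕ → ℤ be a function such that for every n ≥ c, φ(n) < max{φ(n−1), φ(n−c)}. Then there exists n₀ ∈ ℕ such that φ(n) < 0 for every n > n₀. -/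
/-! Let `M` bound the first `c` values of `φ`. The hypothesis propagates this bound to all of `ℕ`.
Moreover, if `φ ≤ B` from some index `a` on, then for `n ≥ a + c` both `n - 1` and `n - c` are at
least `a`, so `φ n < B`: the bound drops by at least one every `c` steps, because `φ` takes integer
values. After enough steps it is negative. -/

open SimpleGraph

/-- progressive induction principle. -/
theorem progressive_induction (c : ℕ) (hc : 1 ≤ c) (φ : ℕ → ℤ)
    (h : ∀ n : ℕ, c ≤ n → φ n < max (φ (n - 1)) (φ (n - c))) :
    ∃ n₀ : ℕ, ∀ n : ℕ, n > n₀ → φ n < 0 := by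
  obtain ⟨M, hM⟩ : ∃ M : ℤ, ∀ n < c, φ n ≤ M := by
    obtain ⟨M, hM⟩ := ((Finset.range c).image φ).bddAbove
    exact ⟨M, fun n hn => hM (by simpa using ⟨n, hn, rfl⟩)⟩
  have bound : ∀ n, φ n ≤ M := by
    intro n
    induction n using Nat.strong_induction_on with
    | _ n ih =>
      rcases lt_or_ge n c with hn | hn
      · exact hM n hn
      · exact (h n hn).le.trans (max_le (ih _ (by omega)) (ih _ (by omega)))
  have drop : ∀ k n : ℕ, k * c ≤ n → φ n ≤ M - k := by
    intro k
    induction k with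
    | zero => intro n _; simpa using bound n
    | succ k ih =>
      intro n hn
      rw [Nat.succ_mul] at hn
      have hlt := (h n (by omega)).trans_le
        (max_le (ih (n - 1) (by omega)) (ih (n - c) (by omega)))
      push_cast
      omega
  refine ⟨(M.toNat + 1) * c, fun n hn => ?_⟩
  have hk := drop (M.toNat + 1) n hn.le
  push_cast at hk
  omega
end
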